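/- Let (K, v_K) be a field with a non-trivial real-valued valuation and let (L, v_L) be any field extension of K equipped with a real-valued valuation v_L extending v_K, with rings of integers K° and L°. Then H₁(𝕃_{L°/K°}) = 0 if and only if H₁(𝕃_{L/K}) = 0, and the latter holds precisely when L is a separable field extension of K. -/

import Mathlib

set_option synthInstance.maxHeartbeats 800000
set_option maxHeartbeats 1600000

noncomputable section

/-- The unit ball (ring of integers) of a real-valued additive semi-valuation. -/
def AddValuation.unitBall {A : Type*} [CommRing A] (v : AddValuation A (WithTop ℝ)) :
    Subring A where
  carrier := {a | 0 ≤ v a}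
  zero_mem' := by simp only [Set.mem_setOf_eq, AddValuation.map_zero]; exact le_top
  one_mem' := by simp only [Set.mem_setOf_eq, AddValuation.map_one]; exact le_refl _
  add_mem' := by
    intro a b ha hb
    exact le_trans (le_min ha hb) (v.map_add a b)
  mul_mem' := by
    intro a b ha hb
    simp only [Set.mem_setOf_eq, AddValuation.map_mul]
    exact add_nonneg ha hb
  neg_mem' := by
    intro a ha
    simpa only [Set.mem_setOf_eq, AddValuation.map_neg] using ha

/-- A real-valued additive valuation on a field is *non-trivial* if it does not vanish on all
of `K^×`. -/
def AddValuation.IsNontrivial {K : Type*} [Field K] (v : AddValuation K (WithTop ℝ)) : Prop :=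
  ∃ x : K, x ≠ 0 ∧ v x ≠ 0

/-- A field extension `M / K` is *separably generated* if it admits a separating transcendence
basis: a subset `T ⊆ M` algebraically independent over `K` such that `M` is (algebraic and)
separable over the subfield `K(T)` generated by `T`. -/
def IsSeparablyGenerated (K M : Type*) [Field K] [Field M] [Algebra K M] : Prop :=
  ∃ T : Set M, AlgebraicIndependent K ((↑) : T → M) ∧
    Algebra.IsSeparable (IntermediateField.adjoin K T) M

/-- A (possibly transcendental) field extension `L / K` is *separable* if every finitely
generated subextension is separably generated. -/
def IsSeparableFieldExtension (K L : Type*) [Field K] [Field L] [Algebra K L] : Prop :=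
  ∀ S : Finset L, IsSeparablyGenerated K (IntermediateField.adjoin K (S : Set L))

/-!
Embed `L` in an algebraically closed valued field `M`. Working with conormal modules `I / I²` of
presentations, we show that `H₁` of the cotangent complex of `L°` over `K°` is torsion-free. The
module `I / I²` of `L°` embeds into that of `M°`, and `M°` is reached from `L°`, and from `K°`, by a
transfinite chain of subfields whose rings of integers are filtered unions of localizations of
hypersurface algebras `A[y] = A[σ]/(g)` over the previous one. As `A` is a valuation ring such
algebras are flat, and a hypersurface has no `H₂`: passing from `A` to `A[y]` is injective on
`I / I²` and preserves its torsion-freeness. Inverting the nonzero elements of `K°` turns `H₁` for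
`L° / K°` into `H₁` for `L / K`, and a torsion-free module vanishes once its localization does.

Separably generated extensions are formally smooth, which gives one half of the field statement
after passing to finitely generated subextensions. Conversely, `H₁(𝕃_{L/K}) = 0` makes
`L ⊗ Ω[K/ℤ] → Ω[L/ℤ]` injective; in characteristic `p` this keeps elements of `L` linearly
independent over `K` after raising them to the `p`-th power, which is MacLane's criterion.
-/

section RelationIdeal

open MvPolynomial

variable {R A B D : Type*} [CommRing R] [CommRing A] [CommRing B] [CommRing D]
  [Algebra R A] [Algebra R B] [Algebra R D]

variable (R B) in
/-- The kernel `I` of the tautological presentation `R[B] → B`, `X_b ↦ b`. It is functorial in `B`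
on the nose, which is why the conormal module `I / I²` is always formed from this presentation. -/
def relationIdeal : Ideal (MvPolynomial B R) :=
  RingHom.ker (aeval (R := R) (id : B → B))

variable (R B) in
/-- The conormal module `I / I²` of the tautological presentation of `B` is `R`-torsion-free. -/
def ConormalTorsionFree : Prop :=
  ∀ r : R, r ≠ 0 → ∀ f ∈ relationIdeal R B,
    C r * f ∈ relationIdeal R B ^ 2 → f ∈ relationIdeal R B ^ 2

/-- The map `I_A / I_A² → I_B / I_B²` of conormal modules of tautological presentations is
injective. This stands in for the vanishing of `H₂` of the cotangent complex of `φ`. -/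
def ConormalInjective (φ : A →ₐ[R] B) : Prop :=
  ∀ f ∈ relationIdeal R A, rename φ f ∈ relationIdeal R B ^ 2 → f ∈ relationIdeal R A ^ 2

lemma mem_relationIdeal {f : MvPolynomial B R} :
    f ∈ relationIdeal R B ↔ aeval (id : B → B) f = 0 :=
  Iff.rfl

lemma aeval_id_rename_algHom (φ : A →ₐ[R] B) (f : MvPolynomial A R) :
    aeval (id : B → B) (rename φ f) = φ (aeval (id : A → A) f) := by
  rw [aeval_rename, ← AlgHom.comp_apply, comp_aeval]
  rfl

lemma rename_mem_relationIdeal (φ : A →ₐ[R] B) {f : MvPolynomial A R}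
    (hf : f ∈ relationIdeal R A) : rename φ f ∈ relationIdeal R B := by
  rw [mem_relationIdeal] at hf ⊢
  rw [aeval_id_rename_algHom, hf, map_zero]

lemma rename_mem_relationIdeal_iff {φ : A →ₐ[R] B} (hφ : Function.Injective φ)
    {f : MvPolynomial A R} : rename φ f ∈ relationIdeal R B ↔ f ∈ relationIdeal R A := by
  rw [mem_relationIdeal, mem_relationIdeal, aeval_id_rename_algHom, map_eq_zero_iff φ hφ]

lemma rename_mem_relationIdeal_sq (φ : A →ₐ[R] B) {f : MvPolynomial A R}
    (hf : f ∈ relationIdeal R A ^ 2) : rename φ f ∈ relationIdeal R B ^ 2 := by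
  have hle : (relationIdeal R A).map (rename φ : MvPolynomial A R →ₐ[R] _) ≤ relationIdeal R B :=
    Ideal.map_le_iff_le_comap.2 fun _ ↦ rename_mem_relationIdeal φ
  have := Ideal.mem_map_of_mem (rename φ : MvPolynomial A R →ₐ[R] _) hf
  rw [Ideal.map_pow] at this
  exact Ideal.pow_right_mono hle 2 this

lemma ConormalInjective.comp {φ : A →ₐ[R] B} {ψ : B →ₐ[R] D}
    (hφ : ConormalInjective φ) (hψ : ConormalInjective ψ) : ConormalInjective (ψ.comp φ) := by
  intro f hf h
  refine hφ f hf (hψ _ (rename_mem_relationIdeal φ hf) ?_)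
  rw [rename_rename]
  exact h

lemma ConormalInjective.of_algEquiv (e : A ≃ₐ[R] B) : ConormalInjective (e : A →ₐ[R] B) := by
  intro f _ h
  have hf := rename_mem_relationIdeal_sq (e.symm : B →ₐ[R] A) h
  have hid : ((e.symm : B →ₐ[R] A) : B → A) ∘ ((e : A →ₐ[R] B) : A → B) = id :=
    funext e.symm_apply_apply
  rwa [rename_rename, hid, rename_id_apply] at hf

lemma ConormalTorsionFree.of_conormalInjective {φ : A →ₐ[R] B} (hφ : ConormalInjective φ)
    (hB : ConormalTorsionFree R B) : ConormalTorsionFree R A := by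
  intro r hr f hf h
  refine hφ f hf (hB r hr _ (rename_mem_relationIdeal φ hf) ?_)
  simpa only [map_mul, rename_C] using rename_mem_relationIdeal_sq φ h

open Classical in
/-- Only finitely many elements of `B` occur in a witness of `f ∈ I²`. -/
lemma exists_finset_mem_relationIdeal_sq {f : MvPolynomial B R} (hf : f ∈ relationIdeal R B ^ 2) :
    ∃ S : Finset B, ∀ (B₁ : Type*) [CommRing B₁] [Algebra R B₁] (ι : B₁ →ₐ[R] B),
      Function.Injective ι → (S : Set B) ⊆ Set.range ι →
      ∃ g ∈ relationIdeal R B₁ ^ 2, rename ι g = f := by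
  rw [pow_two] at hf
  simp only [pow_two]
  induction hf using Submodule.mul_induction_on' with
  | mem_mul_mem a ha b hb =>
    refine ⟨a.vars ∪ b.vars, fun B₁ _ _ ι hι h ↦ ?_⟩
    rw [Finset.coe_union, Set.union_subset_iff] at h
    obtain ⟨a₁, rfl⟩ := exists_rename_eq_of_vars_subset_range a ι hι h.1
    obtain ⟨b₁, rfl⟩ := exists_rename_eq_of_vars_subset_range b ι hι h.2
    rw [rename_mem_relationIdeal_iff hι] at ha hb
    exact ⟨a₁ * b₁, Ideal.mul_mem_mul ha hb, map_mul _ _ _⟩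
  | add a ha b hb iha ihb =>
    obtain ⟨S, hS⟩ := iha
    obtain ⟨T, hT⟩ := ihb
    refine ⟨S ∪ T, fun B₁ _ _ ι hι h ↦ ?_⟩
    rw [Finset.coe_union, Set.union_subset_iff] at h
    obtain ⟨a₁, ha₁, rfl⟩ := hS B₁ ι hι h.1
    obtain ⟨b₁, hb₁, rfl⟩ := hT B₁ ι hι h.2
    exact ⟨a₁ + b₁, add_mem ha₁ hb₁, map_add _ _ _⟩

open Classical in
lemma ConormalTorsionFree.of_forall_finset
    (H : ∀ S : Finset B, ∃ (B₁ : Type _) (_ : CommRing B₁) (_ : Algebra R B₁) (ι : B₁ →ₐ[R] B),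
      Function.Injective ι ∧ (S : Set B) ⊆ Set.range ι ∧ ConormalTorsionFree R B₁) :
    ConormalTorsionFree R B := by
  intro r hr f hf hrf
  obtain ⟨S, hS⟩ := exists_finset_mem_relationIdeal_sq hrf
  obtain ⟨B₁, _, _, ι, hι, hsub, hB₁⟩ := H (S ∪ f.vars)
  rw [Finset.coe_union, Set.union_subset_iff] at hsub
  obtain ⟨f₁, rfl⟩ := exists_rename_eq_of_vars_subset_range f ι hι hsub.2
  obtain ⟨g, hg, hgf⟩ := hS B₁ ι hι hsub.1
  obtain rfl : g = C r * f₁ := rename_injective ι hι (by rw [hgf, map_mul, rename_C])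
  exact rename_mem_relationIdeal_sq ι (hB₁ r hr f₁ ((rename_mem_relationIdeal_iff hι).1 hf) hg)

lemma ConormalInjective.of_forall_finset (φ : A →ₐ[R] B)
    (H : ∀ S : Finset B, ∃ (B₁ : Type _) (_ : CommRing B₁) (_ : Algebra R B₁) (ι : B₁ →ₐ[R] B)
      (φ₁ : A →ₐ[R] B₁), ι.comp φ₁ = φ ∧
      Function.Injective ι ∧ (S : Set B) ⊆ Set.range ι ∧ ConormalInjective φ₁) :
    ConormalInjective φ := by
  intro f hf hφf
  obtain ⟨S, hS⟩ := exists_finset_mem_relationIdeal_sq hφf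
  obtain ⟨B₁, _, _, ι, φ₁, rfl, hι, hsub, hφ₁⟩ := H S
  obtain ⟨g, hg, hgf⟩ := hS B₁ ι hι hsub
  obtain rfl : g = rename φ₁ f := rename_injective ι hι (by rw [hgf, rename_rename]; rfl)
  exact hφ₁ f hf hg

/-- The algebra map `φ` is injective on conormal modules of tautological presentations and carries
torsion-freeness of the conormal module from its source to its target. -/
structure ConormalPure (φ : A →ₐ[R] B) : Prop where
  injective : ConormalInjective φ
  torsionFree : ConormalTorsionFree R A → ConormalTorsionFree R B

lemma ConormalPure.id : ConormalPure (AlgHom.id R A) :=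
  ⟨.of_algEquiv .refl, fun h ↦ h⟩

lemma ConormalPure.comp {φ : A →ₐ[R] B} {ψ : B →ₐ[R] D} (hφ : ConormalPure φ)
    (hψ : ConormalPure ψ) : ConormalPure (ψ.comp φ) :=
  ⟨hφ.injective.comp hψ.injective, hψ.torsionFree ∘ hφ.torsionFree⟩

lemma ConormalPure.of_forall_finset (φ : A →ₐ[R] B)
    (H : ∀ S : Finset B, ∃ (B₁ : Type _) (_ : CommRing B₁) (_ : Algebra R B₁) (ι : B₁ →ₐ[R] B)
      (φ₁ : A →ₐ[R] B₁), ι.comp φ₁ = φ ∧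
      Function.Injective ι ∧ (S : Set B) ⊆ Set.range ι ∧ ConormalPure φ₁) :
    ConormalPure φ where
  injective := .of_forall_finset φ fun S ↦
    let ⟨B₁, _, _, ι, φ₁, hφ, hι, hS, h⟩ := H S
    ⟨B₁, _, _, ι, φ₁, hφ, hι, hS, h.injective⟩
  torsionFree hA := .of_forall_finset fun S ↦
    let ⟨B₁, _, _, ι, _, _, hι, hS, h⟩ := H S
    ⟨B₁, _, _, ι, hι, hS, h.torsionFree hA⟩

end RelationIdeal

section FlatExtension

open TensorProduct

variable {P A Q B : Type*} [CommRing P] [CommRing A] [CommRing Q] [CommRing B]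
  [Algebra P A] [Algebra P Q] [Algebra A B] [Algebra P B] [Algebra Q B]
  [IsScalarTower P A B] [IsScalarTower P Q B]

variable (Q) in
/-- The multiplication map `Q ⊗ I → Q`, with image the extended ideal `I Q`. -/
def tensorIdealMul (I : Ideal P) : Q ⊗[P] I →ₗ[Q] Q :=
  LinearMap.liftBaseChange Q ((Algebra.linearMap P Q).comp I.subtype)

variable (Q B) in
/-- The reduction `Q ⊗ I → B ⊗ I`, for a `Q`-algebra `B`. -/
def tensorIdealReduce (I : Ideal P) : Q ⊗[P] I →ₗ[Q] B ⊗[P] I :=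
  AlgebraTensorModule.map (Algebra.linearMap Q B) (LinearMap.id : I →ₗ[P] I)

@[simp] lemma tensorIdealMul_tmul (I : Ideal P) (p : Q) (i : I) :
    tensorIdealMul Q I (p ⊗ₜ i) = p * algebraMap P Q i := by
  simp [tensorIdealMul]

@[simp] lemma tensorIdealReduce_tmul (I : Ideal P) (p : Q) (i : I) :
    tensorIdealReduce Q B I (p ⊗ₜ i) = (algebraMap Q B p) ⊗ₜ i := by
  simp [tensorIdealReduce]

lemma tensorIdealMul_injective [Module.Flat P Q] (I : Ideal P) :
    Function.Injective (tensorIdealMul Q I) := by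
  have hcomp : (tensorIdealMul Q I).restrictScalars P =
      (TensorProduct.rid P Q).toLinearMap ∘ₗ I.subtype.lTensor Q := by
    ext p i
    simp [Algebra.smul_def, mul_comm]
  have hinj := (TensorProduct.rid P Q).injective.comp
    (Module.Flat.lTensor_preserves_injective_linearMap (M := Q) I.subtype I.injective_subtype)
  exact (congrArg (fun g : Q ⊗[P] I →ₗ[P] Q ↦ Function.Injective g) hcomp).mpr hinj

lemma range_tensorIdealMul (I : Ideal P) :
    LinearMap.range (tensorIdealMul Q I) = I.map (algebraMap P Q) := by
  apply le_antisymm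
  · rintro _ ⟨w, rfl⟩
    induction w using TensorProduct.induction_on with
    | zero => simp
    | tmul p i =>
      rw [tensorIdealMul_tmul]
      exact Ideal.mul_mem_left _ _ (Ideal.mem_map_of_mem _ i.2)
    | add a b ha hb => rw [map_add]; exact add_mem ha hb
  · rw [Ideal.map_le_iff_le_comap]
    exact fun i hi ↦ ⟨1 ⊗ₜ ⟨i, hi⟩, by simp⟩

lemma mem_mul_map_iff_exists_tensor (I : Ideal P) (J : Ideal Q) {x : Q} :
    x ∈ J * I.map (algebraMap P Q) ↔
      ∃ z, tensorIdealMul Q I ((J.subtype.restrictScalars P).rTensor I z) = x := by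
  constructor
  · intro hx
    induction hx using Submodule.mul_induction_on' with
    | mem_mul_mem a ha b hb =>
      rw [← range_tensorIdealMul] at hb
      obtain ⟨v, rfl⟩ := hb
      induction v using TensorProduct.induction_on with
      | zero => exact ⟨0, by simp⟩
      | tmul p i => exact ⟨(⟨a * p, J.mul_mem_right p ha⟩ : J) ⊗ₜ i, by simp [mul_assoc]⟩
      | add c d hc hd =>
        obtain ⟨z₁, h₁⟩ := hc
        obtain ⟨z₂, h₂⟩ := hd
        exact ⟨z₁ + z₂, by rw [map_add, map_add, h₁, h₂, map_add, mul_add]⟩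
    | add c _ d _ hc hd =>
      obtain ⟨z₁, rfl⟩ := hc
      obtain ⟨z₂, rfl⟩ := hd
      exact ⟨z₁ + z₂, by rw [map_add, map_add]⟩
  · rintro ⟨z, rfl⟩
    induction z using TensorProduct.induction_on with
    | zero => simp
    | tmul p i =>
      rw [LinearMap.rTensor_tmul, tensorIdealMul_tmul]
      exact Ideal.mul_mem_mul p.2 (Ideal.mem_map_of_mem _ i.2)
    | add a b ha hb => rw [map_add, map_add]; exact add_mem ha hb

/-- For flat `Q` this says `B ⊗ I ≅ I Q / J (I Q)`, where `J = ker (Q → B)`. -/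
lemma tensorIdealReduce_eq_zero_iff [Module.Flat P Q]
    (hPB : Function.Surjective (algebraMap Q B)) (I : Ideal P) (w : Q ⊗[P] I) :
    tensorIdealReduce Q B I w = 0 ↔
      tensorIdealMul Q I w ∈ RingHom.ker (algebraMap Q B) * I.map (algebraMap P Q) := by
  set J := RingHom.ker (algebraMap Q B)
  have hJ : Function.Exact (J.subtype.restrictScalars P)
      ((Algebra.linearMap Q B).restrictScalars P) :=
    fun x ↦ ⟨fun h ↦ ⟨⟨x, h⟩, rfl⟩, fun ⟨y, hy⟩ ↦ hy ▸ y.2⟩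
  rw [mem_mul_map_iff_exists_tensor]
  refine (rTensor_exact I hJ hPB w).trans ⟨fun ⟨z, hz⟩ ↦ ⟨z, congrArg _ hz⟩, fun ⟨z, hz⟩ ↦ ⟨z, ?_⟩⟩
  exact tensorIdealMul_injective I hz

lemma one_tmul_eq_zero_iff_mem_sq (hPA : Function.Surjective (algebraMap P A))
    (f : RingHom.ker (algebraMap P A)) :
    (1 : A) ⊗ₜ[P] f = 0 ↔ (f : P) ∈ RingHom.ker (algebraMap P A) ^ 2 := by
  simpa [pow_two] using
    tensorIdealReduce_eq_zero_iff (Q := P) hPA (RingHom.ker (algebraMap P A)) (1 ⊗ₜ f)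

lemma exists_eq_one_tmul (hPA : Function.Surjective (algebraMap P A)) (I : Ideal P)
    (w : A ⊗[P] I) : ∃ f : I, w = 1 ⊗ₜ f := by
  obtain ⟨f, hf⟩ := TensorProduct.mk_surjective P I A hPA w
  exact ⟨f, hf.symm⟩

section

variable (hPA : Function.Surjective (algebraMap P A)) (hPB : Function.Surjective (algebraMap Q B))
include hPA hPB

lemma mem_ker_mul_map_of_mul_mem [Module.Flat P Q] [Module.Flat A B] (r : P)
    (hr : ∀ f ∈ RingHom.ker (algebraMap P A), r * f ∈ RingHom.ker (algebraMap P A) ^ 2 →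
      f ∈ RingHom.ker (algebraMap P A) ^ 2)
    {x : Q} (hx : x ∈ (RingHom.ker (algebraMap P A)).map (algebraMap P Q))
    (hrx : algebraMap P Q r * x ∈ RingHom.ker (algebraMap Q B) *
      (RingHom.ker (algebraMap P A)).map (algebraMap P Q)) :
    x ∈ RingHom.ker (algebraMap Q B) * (RingHom.ker (algebraMap P A)).map (algebraMap P Q) := by
  set I := RingHom.ker (algebraMap P A)
  rw [← range_tensorIdealMul] at hx
  obtain ⟨w, rfl⟩ := hx
  rw [← tensorIdealReduce_eq_zero_iff hPB]
  have hrw : r • tensorIdealReduce Q B I w = 0 := by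
    rw [← algebraMap_smul Q r, ← map_smul, tensorIdealReduce_eq_zero_iff hPB, map_smul]
    exact hrx
  have hinj : Function.Injective (LinearMap.lsmul A (A ⊗[P] I) (algebraMap P A r)) := by
    refine (injective_iff_map_eq_zero _).2 fun m hm ↦ ?_
    obtain ⟨f, rfl⟩ := exists_eq_one_tmul hPA I m
    rw [LinearMap.lsmul_apply, algebraMap_smul, ← TensorProduct.tmul_smul,
      one_tmul_eq_zero_iff_mem_sq hPA] at hm
    exact (one_tmul_eq_zero_iff_mem_sq hPA f).2 (hr f f.2 hm)
  have hsmul : LinearMap.lTensor B (LinearMap.lsmul A (A ⊗[P] I) (algebraMap P A r)) =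
      LinearMap.lsmul A (B ⊗[A] (A ⊗[P] I)) (algebraMap P A r) := by
    ext
    simp
  apply (AlgebraTensorModule.cancelBaseChange P A B B I).symm.injective
  apply Module.Flat.lTensor_preserves_injective_linearMap (M := B) _ hinj
  rw [hsmul, map_zero, map_zero, LinearMap.lsmul_apply, algebraMap_smul]
  have := congrArg (AlgebraTensorModule.cancelBaseChange P A B B I).symm hrw
  rwa [← algebraMap_smul B r, map_smul, algebraMap_smul, map_zero] at this

lemma mem_ker_sq_of_mul_mem_ker_mul_map [Module.Flat P Q] {f : P}
    (hf : f ∈ RingHom.ker (algebraMap P A)) (s : Q)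
    (hsf : s * algebraMap P Q f ∈ RingHom.ker (algebraMap Q B) *
      (RingHom.ker (algebraMap P A)).map (algebraMap P Q))
    (D : Type*) [CommRing D] [Algebra A D] [Algebra B D] [IsScalarTower A B D]
    [Module.FaithfullyFlat A D] (hsD : IsUnit (algebraMap B D (algebraMap Q B s))) :
    f ∈ RingHom.ker (algebraMap P A) ^ 2 := by
  set I := RingHom.ker (algebraMap P A)
  have hB : algebraMap Q B s ⊗ₜ[P] (⟨f, hf⟩ : I) = 0 := by
    rw [← tensorIdealReduce_tmul, tensorIdealReduce_eq_zero_iff hPB, tensorIdealMul_tmul]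
    exact hsf
  have hBA := congrArg (AlgebraTensorModule.cancelBaseChange P A B B I).symm hB
  rw [map_zero, AlgebraTensorModule.cancelBaseChange_symm_tmul] at hBA
  have hD := congrArg (((Algebra.linearMap B D).restrictScalars A).rTensor (A ⊗[P] I)) hBA
  rw [map_zero, LinearMap.rTensor_tmul, LinearMap.restrictScalars_apply,
    Algebra.linearMap_apply] at hD
  have hone : (1 : D) ⊗ₜ[A] ((1 : A) ⊗ₜ[P] (⟨f, hf⟩ : I)) = 0 := by
    obtain ⟨u, hu⟩ := hsD
    simpa [TensorProduct.smul_tmul', ← hu] using congrArg ((↑u⁻¹ : D) • ·) hD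
  rw [← one_tmul_eq_zero_iff_mem_sq hPA ⟨f, hf⟩]
  apply Module.FaithfullyFlat.tensorProduct_mk_injective (A := A) (B := D) (A ⊗[P] I)
  rw [map_zero]
  exact hone

end

end FlatExtension

section PrimePlusPrincipal

variable {P : Type*} [CommRing P] {I J : Ideal P} {G : P} (hJ : J = I ⊔ Ideal.span {G})
include hJ

lemma sq_eq_mul_sup_span_sq : J ^ 2 = J * I ⊔ Ideal.span {G ^ 2} := by
  have hIJ : I ≤ J := by rw [hJ]; exact le_sup_left
  have hGJ : Ideal.span {G} ≤ J := by rw [hJ]; exact le_sup_right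
  have hIG : I * Ideal.span {G} ≤ J * I := by
    rw [mul_comm I]; exact Ideal.mul_mono_left hGJ
  rw [← Ideal.span_singleton_pow, pow_two, pow_two]
  apply le_antisymm
  · calc J * J = J * I ⊔ (I * Ideal.span {G} ⊔ Ideal.span {G} * Ideal.span {G}) := by
          rw [← Ideal.sup_mul, ← hJ, ← Ideal.mul_sup, ← hJ]
      _ ≤ J * I ⊔ Ideal.span {G} * Ideal.span {G} :=
          sup_le le_sup_left (sup_le_sup_right hIG _)
  · exact sup_le (Ideal.mul_mono_right hIJ) (Ideal.mul_mono hGJ hGJ)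

lemma mem_mul_of_mem_of_mem_sq [I.IsPrime] {x : P} (hx : x ∈ I) (hx2 : x ∈ J ^ 2) :
    x ∈ J * I := by
  by_cases hG : G ∈ I
  · have hJI : J = I := by
      rw [hJ, sup_eq_left, Ideal.span_singleton_le_iff_mem]; exact hG
    rwa [hJI, ← pow_two, ← hJI]
  rw [sq_eq_mul_sup_span_sq hJ, Submodule.mem_sup] at hx2
  obtain ⟨a, ha, b, hb, rfl⟩ := hx2
  obtain ⟨h, rfl⟩ := Ideal.mem_span_singleton'.1 hb
  have hhG : h * G ^ 2 ∈ I := (Ideal.add_mem_iff_right I (Ideal.mul_le_right ha)).1 hx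
  have hh : h ∈ I := (Ideal.IsPrime.mem_or_mem ‹_› hhG).resolve_right
    fun hG2 ↦ hG (Ideal.IsPrime.mem_of_pow_mem ‹_› _ hG2)
  have hGJ : G ∈ J := by rw [hJ]; exact Ideal.mem_sup_right (Ideal.mem_span_singleton_self G)
  refine add_mem ha ?_
  rw [mul_comm h, pow_two, mul_assoc]
  exact Ideal.mul_mem_mul hGJ (I.mul_mem_left _ hh)

lemma mem_sq_of_mul_mem_sq [I.IsPrime] (r : P) (hrJ : ∀ h, r * h ∈ J → h ∈ J)
    (hrI : ∀ x ∈ I, r * x ∈ J * I → x ∈ J * I) {f : P} (hf : f ∈ J) (hrf : r * f ∈ J ^ 2) :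
    f ∈ J ^ 2 := by
  have hIJ : I ≤ J := by rw [hJ]; exact le_sup_left
  have hJI : J * I ≤ J ^ 2 := by rw [pow_two]; exact Ideal.mul_mono_right hIJ
  have hGJ : G ∈ J := by rw [hJ]; exact Ideal.mem_sup_right (Ideal.mem_span_singleton_self G)
  have of_mem_I : ∀ x ∈ I, r * x ∈ J ^ 2 → x ∈ J ^ 2 := fun x hx hrx ↦
    hJI (hrI x hx (mem_mul_of_mem_of_mem_sq hJ (I.mul_mem_left _ hx) hrx))
  by_cases hG : G ∈ I
  · refine of_mem_I f ?_ hrf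
    rwa [hJ, sup_eq_left.2 ((Ideal.span_singleton_le_iff_mem I).2 hG)] at hf
  have hf' := hf
  rw [hJ, Submodule.mem_sup] at hf'
  obtain ⟨a, ha, b, hb, rfl⟩ := hf'
  obtain ⟨h, rfl⟩ := Ideal.mem_span_singleton'.1 hb
  have hh : h ∈ J := by
    have hrf' := hrf
    rw [sq_eq_mul_sup_span_sq hJ, Submodule.mem_sup] at hrf'
    obtain ⟨c, hc, d, hd, hcd⟩ := hrf'
    obtain ⟨k, rfl⟩ := Ideal.mem_span_singleton'.1 hd
    have hmem : G * (r * h - k * G) ∈ I := by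
      rw [show G * (r * h - k * G) = c - r * a by linear_combination -hcd]
      exact sub_mem (Ideal.mul_le_right hc) (I.mul_mem_left _ ha)
    have hI := (Ideal.IsPrime.mem_or_mem ‹_› hmem).resolve_left hG
    exact hrJ h (by simpa using add_mem (hIJ hI) (J.mul_mem_left k hGJ))
  have hhG : h * G ∈ J ^ 2 := by rw [pow_two]; exact Ideal.mul_mem_mul hh hGJ
  refine add_mem (of_mem_I a ha ?_) hhG
  rw [mul_add] at hrf
  exact (Ideal.add_mem_iff_left _ (Ideal.mul_mem_left _ _ hhG)).1 hrf

end PrimePlusPrincipal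

section CotangentClasses

open MvPolynomial
open Algebra (Extension Generators H1Cotangent)

variable {R B : Type*} [CommRing R] [CommRing B] [Algebra R B]

lemma smul_cotangentMk_eq_zero_iff (E : Extension R B) (s : E.Ring) (f : E.ker) :
    algebraMap E.Ring B s • Extension.Cotangent.mk f = 0 ↔ s * f ∈ E.ker ^ 2 := by
  rw [algebraMap_smul, ← map_smul, Extension.Cotangent.mk_eq_zero_iff]
  rfl

lemma isTorsionFree_h1Cotangent_of_ker [IsDomain R] (E : Extension R B)
    (h : ∀ r : R, r ≠ 0 → ∀ f ∈ E.ker, algebraMap R E.Ring r * f ∈ E.ker ^ 2 → f ∈ E.ker ^ 2) :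
    Module.IsTorsionFree R E.H1Cotangent := by
  refine .of_smul_eq_zero fun r t ht ↦ or_iff_not_imp_left.2 fun hr ↦ ?_
  apply E.h1Cotangentι_injective
  obtain ⟨f, hf⟩ := Extension.Cotangent.mk_surjective (E.h1Cotangentι t)
  have hrf := congrArg E.h1Cotangentι ht
  rw [← algebraMap_smul B, map_smul, map_zero, ← hf, IsScalarTower.algebraMap_apply R E.Ring B,
    smul_cotangentMk_eq_zero_iff] at hrf
  rw [map_zero, ← hf, Extension.Cotangent.mk_eq_zero_iff]
  exact h r hr f f.2 hrf

lemma cotangentComplex_mk_self_eq_zero_iff (f : (Generators.self R B).toExtension.ker) :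
    (Generators.self R B).toExtension.cotangentComplex (Extension.Cotangent.mk f) = 0 ↔
      ∀ i, aeval (id : B → B) (pderiv i (show MvPolynomial B R from f.1)) = 0 := by
  rw [← ((Generators.self R B).cotangentSpaceBasis.repr).map_eq_zero_iff, Finsupp.ext_iff,
    Extension.cotangentComplex_mk]
  exact forall_congr' fun i ↦
    Eq.congr_left ((Generators.self R B).cotangentSpaceBasis_repr_one_tmul f.1 i)

lemma aeval_pderiv_eq_zero_of_mem_sq {f : MvPolynomial B R} (hf : f ∈ relationIdeal R B ^ 2)
    (i : B) : aeval (id : B → B) (pderiv i f) = 0 := by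
  let f' : (Generators.self R B).toExtension.ker := ⟨f, Ideal.pow_le_self two_ne_zero hf⟩
  have hf' : Extension.Cotangent.mk f' = 0 := (Extension.Cotangent.mk_eq_zero_iff f').2 hf
  exact (cotangentComplex_mk_self_eq_zero_iff f').1 (by rw [hf', map_zero]) i

lemma exists_h1Cotangent_eq_mk {f : MvPolynomial B R} (hf : f ∈ relationIdeal R B)
    (hd : ∀ i, aeval (id : B → B) (pderiv i f) = 0) :
    ∃ t : H1Cotangent R B, Extension.h1Cotangentι t =
      Extension.Cotangent.mk (P := (Generators.self R B).toExtension) ⟨f, hf⟩ :=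
  ⟨⟨_, (cotangentComplex_mk_self_eq_zero_iff ⟨f, hf⟩).2 hd⟩, rfl⟩

lemma subsingleton_h1Cotangent_iff :
    Subsingleton (H1Cotangent R B) ↔ ∀ f ∈ relationIdeal R B,
      (∀ i, aeval (id : B → B) (pderiv i f) = 0) → f ∈ relationIdeal R B ^ 2 := by
  let E := (Generators.self R B).toExtension
  refine ⟨fun _ f hf hd ↦ ?_, fun h ↦ subsingleton_of_forall_eq 0 fun t ↦ ?_⟩
  · obtain ⟨t, ht⟩ := exists_h1Cotangent_eq_mk hf hd
    rw [Subsingleton.elim t 0, map_zero] at ht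
    exact (Extension.Cotangent.mk_eq_zero_iff (P := E) ⟨f, hf⟩).1 ht.symm
  · apply E.h1Cotangentι_injective
    obtain ⟨f, hf⟩ := Extension.Cotangent.mk_surjective (E.h1Cotangentι t)
    rw [map_zero, ← hf, Extension.Cotangent.mk_eq_zero_iff]
    refine h f.1 f.2 ((cotangentComplex_mk_self_eq_zero_iff f).1 ?_)
    rw [hf]
    exact t.2

section Domain

variable [IsDomain R]

lemma ConormalTorsionFree.isTorsionFree_h1Cotangent (h : ConormalTorsionFree R B) :
    Module.IsTorsionFree R (H1Cotangent R B) :=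
  isTorsionFree_h1Cotangent_of_ker (Generators.self R B).toExtension h

lemma ConormalTorsionFree.of_isTorsionFree_h1Cotangent [Module.IsTorsionFree R B]
    [Module.IsTorsionFree R (H1Cotangent R B)] : ConormalTorsionFree R B := by
  intro r hr f hf hrf
  let E := (Generators.self R B).toExtension
  have hd : ∀ i, aeval (id : B → B) (pderiv i f) = 0 := by
    intro i
    have hrd := aeval_pderiv_eq_zero_of_mem_sq hrf i
    rw [C_mul', Derivation.map_smul, map_smul] at hrd
    exact (smul_eq_zero_iff_right hr).1 hrd
  obtain ⟨t, ht⟩ := exists_h1Cotangent_eq_mk hf hd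
  have hrt : r • t = 0 := by
    apply E.h1Cotangentι_injective
    rw [← algebraMap_smul B, map_smul, map_zero, ht, IsScalarTower.algebraMap_apply R E.Ring B]
    exact (smul_cotangentMk_eq_zero_iff E _ _).2 hrf
  rw [(smul_eq_zero_iff_right hr).1 hrt, map_zero] at ht
  exact (Extension.Cotangent.mk_eq_zero_iff (P := E) ⟨f, hf⟩).1 ht.symm

end Domain

lemma isTorsionFree_of_isLocalizedModule {M N : Type*} [AddCommGroup M] [AddCommGroup N]
    [Module R M] [Module R N] [Module B M] [Module B N] [IsScalarTower R B M] [IsScalarTower R B N]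
    (S : Submonoid B) (φ : M →ₗ[B] N) [IsLocalizedModule S φ] [Module.IsTorsionFree R M] :
    Module.IsTorsionFree R N := by
  refine ⟨fun r hr ↦ ?_⟩
  let b := algebraMap R B r
  have hM : Function.Injective (b • LinearMap.id : M →ₗ[B] M) := by
    simpa [Function.Injective, b] using hr.smul_right_injective (M := M)
  have hN : IsLocalizedModule.map S φ φ (b • LinearMap.id) = b • LinearMap.id :=
    IsLocalizedModule.ext S φ (IsLocalizedModule.map_units φ) (by ext; simp)
  have := IsLocalizedModule.map_injective S φ φ _ hM
  rw [hN] at this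
  simpa [IsSMulRegular, Function.Injective, b] using this

end CotangentClasses

section Hypersurface

open MvPolynomial
open Algebra (Extension FormallySmooth Generators H1Cotangent)

variable {R A B : Type*} [CommRing R] [CommRing A] [CommRing B]
  [Algebra R A] [Algebra R B] [Algebra A B] [IsScalarTower R A B] {σ : Type*}

lemma map_aeval_id_surjective : Function.Surjective
    (MvPolynomial.map (σ := σ) (aeval (R := R) (id : A → A) : MvPolynomial A R →+* A)) :=
  MvPolynomial.map_surjective _ fun a ↦ ⟨X a, by simp⟩

lemma map_C_relationIdeal : (relationIdeal R A).map (C (σ := σ)) =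
    RingHom.ker
      (MvPolynomial.map (σ := σ) (aeval (R := R) (id : A → A) : MvPolynomial A R →+* A)) := by
  rw [MvPolynomial.ker_map]
  rfl

instance isPrime_map_C_relationIdeal [IsDomain A] :
    ((relationIdeal R A).map (C (σ := σ))).IsPrime := by
  rw [map_C_relationIdeal]
  exact RingHom.ker_isPrime _

variable (R A) in
/-- The presentation `R[A][σ] → B` induced by a family `y : σ → B`, combining the tautological
presentation of `A` with the `A`-algebra map `A[σ] → B`, `X i ↦ y i`. -/
def relativePresentation (y : σ → B) : MvPolynomial σ (MvPolynomial A R) →ₐ[R] B :=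
  ((aeval y : MvPolynomial σ A →ₐ[A] B).restrictScalars R).comp
    (mapAlgHom (aeval (R := R) (id : A → A)))

section

variable (y : σ → B)

lemma relativePresentation_apply (p : MvPolynomial σ (MvPolynomial A R)) :
    relativePresentation R A y p =
      aeval y (MvPolynomial.map (aeval (R := R) (id : A → A) : MvPolynomial A R →+* A) p) :=
  rfl

lemma relativePresentation_C (p : MvPolynomial A R) :
    relativePresentation R A y (C p) = algebraMap A B (aeval (id : A → A) p) := by
  rw [relativePresentation_apply, map_C, aeval_C]
  rfl

lemma map_C_relationIdeal_le_ker :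
    (relationIdeal R A).map C ≤ RingHom.ker (relativePresentation R A y) := by
  refine Ideal.map_le_iff_le_comap.2 fun f hf ↦ ?_
  rw [Ideal.mem_comap, RingHom.mem_ker, relativePresentation_C, mem_relationIdeal.1 hf, map_zero]

lemma exists_ker_relativePresentation_eq {g : MvPolynomial σ A}
    (hg : RingHom.ker (aeval y : MvPolynomial σ A →ₐ[A] B) = Ideal.span {g}) :
    ∃ G, RingHom.ker (relativePresentation R A y) =
      (relationIdeal R A).map C ⊔ Ideal.span {G} := by
  obtain ⟨G, hG⟩ := map_aeval_id_surjective (R := R) g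
  refine ⟨G, le_antisymm (fun p hp ↦ ?_) (sup_le (map_C_relationIdeal_le_ker y) ?_)⟩
  · rw [RingHom.mem_ker, relativePresentation_apply, ← RingHom.mem_ker, hg,
      Ideal.mem_span_singleton'] at hp
    obtain ⟨q, hq⟩ := hp
    obtain ⟨q, rfl⟩ := map_aeval_id_surjective (R := R) q
    rw [map_C_relationIdeal, Submodule.mem_sup]
    refine ⟨p - q * G, ?_, q * G, Ideal.mul_mem_left _ _ (Ideal.mem_span_singleton_self _),
      sub_add_cancel _ _⟩
    rw [RingHom.mem_ker, map_sub, map_mul, hG, hq, sub_self]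
  · rw [Ideal.span_singleton_le_iff_mem, RingHom.mem_ker, relativePresentation_apply, hG,
      ← RingHom.mem_ker, hg]
    exact Ideal.mem_span_singleton_self g

end

/-- The map to an extension `E` of `B` from the tautological extension, sending `X_b` to the chosen
lift of `b`. -/
def selfHom (E : Extension R B) : (Generators.self R B).toExtension.Hom E where
  toRingHom := (aeval E.σ : MvPolynomial B R →ₐ[R] E.Ring).toRingHom
  toRingHom_algebraMap := (aeval E.σ : MvPolynomial B R →ₐ[R] E.Ring).commutes
  algebraMap_toRingHom := by
    have h : (IsScalarTower.toAlgHom R E.Ring B).comp (aeval E.σ) = aeval (id : B → B) :=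
      MvPolynomial.algHom_ext fun i ↦ by simp
    exact DFunLike.congr_fun h

lemma h1CotangentMap_eq_selfHom (E : Extension R B) (h : (Generators.self R A).toExtension.Hom E)
    (t : H1Cotangent R A) : Extension.H1Cotangent.map h t =
      Extension.H1Cotangent.map (selfHom E) (H1Cotangent.map R R A B t) := by
  rw [Extension.H1Cotangent.map_eq h ((selfHom E).comp
    (Generators.defaultHom (Generators.self R A) (Generators.self R B)).toExtensionHom),
    Extension.H1Cotangent.map_comp]
  rfl

section RelativePresentation

variable {y : σ → B} (hy : Function.Surjective (aeval y : MvPolynomial σ A →ₐ[A] B))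
include hy

lemma relativePresentation_surjective : Function.Surjective (relativePresentation R A y) :=
  hy.comp map_aeval_id_surjective

lemma mul_C_mem_ker_sq_of_smul_map_eq_zero {f : MvPolynomial A R} (hf : f ∈ relationIdeal R A)
    {t : H1Cotangent R A} (ht : Extension.h1Cotangentι t =
      Extension.Cotangent.mk (P := (Generators.self R A).toExtension) ⟨f, hf⟩)
    (p : MvPolynomial σ (MvPolynomial A R))
    (hpt : relativePresentation R A y p • H1Cotangent.map R R A B t = 0) :
    p * C f ∈ RingHom.ker (relativePresentation R A y) ^ 2 := by
  let E : Extension R B := Extension.ofSurjective _ (relativePresentation_surjective (R := R) hy)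
  let lift : (Generators.self R A).toExtension.Hom E :=
    { toRingHom := (C : MvPolynomial A R →+* MvPolynomial σ (MvPolynomial A R))
      toRingHom_algebraMap := fun _ ↦ rfl
      algebraMap_toRingHom := relativePresentation_C y }
  have hlift : relativePresentation R A y p • Extension.H1Cotangent.map lift t = 0 := by
    rw [h1CotangentMap_eq_selfHom, ← map_smul, hpt, map_zero]
  have hCf : C f ∈ E.ker := map_C_relationIdeal_le_ker y (Ideal.mem_map_of_mem _ hf)
  have hmk : E.h1Cotangentι (Extension.H1Cotangent.map lift t) =
      Extension.Cotangent.mk ⟨C f, hCf⟩ :=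
    congrArg (Extension.Cotangent.map lift) ht
  refine (smul_cotangentMk_eq_zero_iff E p ⟨C f, hCf⟩).1 ?_
  rw [← hmk]
  exact (map_smul E.h1Cotangentι _ _).symm.trans ((congrArg _ hlift).trans (map_zero _))

lemma mem_ker_mul_map_C_of_mul_mem [Module.Flat A B] {r : R} (hr : ∀ f ∈ relationIdeal R A,
      C r * f ∈ relationIdeal R A ^ 2 → f ∈ relationIdeal R A ^ 2)
    {x : MvPolynomial σ (MvPolynomial A R)} (hx : x ∈ (relationIdeal R A).map C)
    (hrx : C (C r) * x ∈ RingHom.ker (relativePresentation R A y) * (relationIdeal R A).map C) :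
    x ∈ RingHom.ker (relativePresentation R A y) * (relationIdeal R A).map C := by
  let _ : Algebra (MvPolynomial A R) A := (aeval (id : A → A)).toAlgebra
  let _ : Algebra (MvPolynomial σ (MvPolynomial A R)) B := (relativePresentation R A y).toAlgebra
  let _ : Algebra (MvPolynomial A R) B :=
    ((algebraMap A B).comp (algebraMap (MvPolynomial A R) A)).toAlgebra
  have : IsScalarTower (MvPolynomial A R) A B := .of_algebraMap_eq fun _ ↦ rfl
  have : IsScalarTower (MvPolynomial A R) (MvPolynomial σ (MvPolynomial A R)) B :=
    .of_algebraMap_eq fun p ↦ (relativePresentation_C y p).symm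
  exact mem_ker_mul_map_of_mul_mem (P := MvPolynomial A R) (A := A) (B := B)
    (fun a ↦ ⟨X a, aeval_X _ _⟩) (relativePresentation_surjective hy) (C r) hr hx hrx

lemma mem_relationIdeal_sq_of_mul_C_mem {f : MvPolynomial A R} (hf : f ∈ relationIdeal R A)
    (p : MvPolynomial σ (MvPolynomial A R))
    (hpf : p * C f ∈ RingHom.ker (relativePresentation R A y) * (relationIdeal R A).map C)
    (D : Type*) [CommRing D] [Algebra A D] [Algebra B D] [IsScalarTower A B D]
    [Module.FaithfullyFlat A D]
    (hpD : IsUnit (algebraMap B D (relativePresentation R A y p))) :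
    f ∈ relationIdeal R A ^ 2 := by
  let _ : Algebra (MvPolynomial A R) A := (aeval (id : A → A)).toAlgebra
  let _ : Algebra (MvPolynomial σ (MvPolynomial A R)) B := (relativePresentation R A y).toAlgebra
  let _ : Algebra (MvPolynomial A R) B :=
    ((algebraMap A B).comp (algebraMap (MvPolynomial A R) A)).toAlgebra
  have : IsScalarTower (MvPolynomial A R) A B := .of_algebraMap_eq fun _ ↦ rfl
  have : IsScalarTower (MvPolynomial A R) (MvPolynomial σ (MvPolynomial A R)) B :=
    .of_algebraMap_eq fun p ↦ (relativePresentation_C y p).symm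
  exact mem_ker_sq_of_mul_mem_ker_mul_map (P := MvPolynomial A R) (A := A) (B := B)
    (fun a ↦ ⟨X a, aeval_X _ _⟩) (relativePresentation_surjective hy) hf p hpf D hpD

end RelativePresentation

lemma exists_smul_map_h1Cotangent_eq_zero {B' : Type*} [CommRing B'] [Algebra R B']
    [Algebra A B'] [Algebra B B'] [IsScalarTower R A B'] [IsScalarTower R B B']
    [IsScalarTower A B B'] (S : Submonoid B) [IsLocalization S B']
    {f : MvPolynomial A R} (hf : f ∈ relationIdeal R A) {t : H1Cotangent R A}
    (ht : Extension.h1Cotangentι t =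
      Extension.Cotangent.mk (P := (Generators.self R A).toExtension) ⟨f, hf⟩)
    (hfB' : rename (IsScalarTower.toAlgHom R A B') f ∈ relationIdeal R B' ^ 2) :
    ∃ s ∈ S, s • H1Cotangent.map R R A B t = 0 := by
  let E := (Generators.self R B').toExtension
  let φ : MvPolynomial A R →ₐ[R] MvPolynomial B' R := rename (IsScalarTower.toAlgHom R A B')
  let hom : (Generators.self R A).toExtension.Hom E :=
    { toRingHom := φ.toRingHom
      toRingHom_algebraMap := φ.commutes
      algebraMap_toRingHom := aeval_id_rename_algHom (IsScalarTower.toAlgHom R A B') }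
  have hAB' : H1Cotangent.map R R B B' (H1Cotangent.map R R A B t) = 0 := by
    have hzero : Extension.H1Cotangent.map hom t = 0 := by
      apply E.h1Cotangentι_injective
      exact (congrArg (Extension.Cotangent.map hom) ht).trans
        ((Extension.Cotangent.mk_eq_zero_iff (P := E) _).2 hfB')
    rw [← hzero, Extension.H1Cotangent.map_eq hom
      ((Generators.defaultHom (Generators.self R B) (Generators.self R B')).toExtensionHom.comp
        (Generators.defaultHom (Generators.self R A) (Generators.self R B)).toExtensionHom),
      Extension.H1Cotangent.map_comp]
    rfl
  have := H1Cotangent.isLocalizedModule R (T := B') S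
  rw [IsLocalizedModule.eq_zero_iff S] at hAB'
  obtain ⟨s, hs⟩ := hAB'
  exact ⟨s, s.2, hs⟩

variable [IsDomain A] {y : σ → B} (hy : Function.Surjective (aeval y : MvPolynomial σ A →ₐ[A] B))
  {g : MvPolynomial σ A} (hg : RingHom.ker (aeval y : MvPolynomial σ A →ₐ[A] B) = Ideal.span {g})
include hy hg

theorem isTorsionFree_h1Cotangent_hypersurface [IsDomain R] [Module.Flat A B]
    [Module.IsTorsionFree R B] (hA : ConormalTorsionFree R A) :
    Module.IsTorsionFree R (H1Cotangent R B) := by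
  obtain ⟨G, hG⟩ := exists_ker_relativePresentation_eq (R := R) y hg
  let E : Extension R B := Extension.ofSurjective _ (relativePresentation_surjective (R := R) hy)
  have : FormallySmooth R E.Ring :=
    FormallySmooth.comp R (MvPolynomial A R) (MvPolynomial σ (MvPolynomial A R))
  have : Module.IsTorsionFree R E.H1Cotangent := by
    refine isTorsionFree_h1Cotangent_of_ker E fun r hr f hf hrf ↦
      mem_sq_of_mul_mem_sq hG (C (C r)) (fun h hh ↦ ?_)
        (fun x ↦ mem_ker_mul_map_C_of_mul_mem hy (hA r hr)) hf hrf
    rw [RingHom.mem_ker, map_mul, relativePresentation_C, aeval_C,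
      ← IsScalarTower.algebraMap_apply, ← Algebra.smul_def] at hh
    exact (smul_eq_zero_iff_right hr).1 hh
  let e := E.equivH1CotangentOfFormallySmooth
  exact Function.Injective.moduleIsTorsionFree e.symm e.symm.injective fun r t ↦
    (e.symm.toLinearMap.restrictScalars R).map_smul r t

theorem conormalInjective_localization_hypersurface {B' D : Type*} [CommRing B'] [CommRing D]
    [Algebra R B'] [Algebra A B'] [Algebra B B'] [IsScalarTower R A B'] [IsScalarTower R B B']
    [IsScalarTower A B B'] (S : Submonoid B) [IsLocalization S B'] [Algebra A D] [Algebra B D]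
    [IsScalarTower A B D] [Module.FaithfullyFlat A D] (hS : ∀ s ∈ S, IsUnit (algebraMap B D s))
    (hAB' : Function.Injective (algebraMap A B')) :
    ConormalInjective (IsScalarTower.toAlgHom R A B') := by
  obtain ⟨G, hG⟩ := exists_ker_relativePresentation_eq (R := R) y hg
  intro f hf hfB'
  have hd : ∀ i, aeval (id : A → A) (pderiv i f) = 0 := by
    intro i
    apply hAB'
    have hi := aeval_pderiv_eq_zero_of_mem_sq hfB' (algebraMap A B' i)
    rw [← IsScalarTower.coe_toAlgHom' R A B', ← aeval_id_rename_algHom, map_zero,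
      ← pderiv_rename (f := IsScalarTower.toAlgHom R A B') hAB']
    exact hi
  obtain ⟨t, ht⟩ := exists_h1Cotangent_eq_mk hf hd
  obtain ⟨s, hs, hst⟩ := exists_smul_map_h1Cotangent_eq_zero (B := B) S hf ht hfB'
  obtain ⟨p, rfl⟩ := relativePresentation_surjective (R := R) hy s
  have hpf : p * C f ∈ (relationIdeal R A).map (C (σ := σ)) :=
    Ideal.mul_mem_left _ p (Ideal.mem_map_of_mem _ hf)
  exact mem_relationIdeal_sq_of_mul_C_mem hy hf p
    (mem_mul_of_mem_of_mem_sq hG hpf (mul_C_mem_ker_sq_of_smul_map_eq_zero hy hf ht p hst)) D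
    (hS _ hs)

end Hypersurface

section HypersurfaceExhaustion

open MvPolynomial

/-- Every finite subset of `D` lies in the localization of an `A`-subalgebra of the form
`A[σ] / (g)` at elements that are invertible in `D`. -/
def ExhaustedByHypersurfaces (A D : Type*) [CommRing A] [CommRing D] [Algebra A D] : Prop :=
  ∀ S : Finset D, ∃ (σ : Type) (y : σ → D) (g : MvPolynomial σ A),
    RingHom.ker (aeval y : MvPolynomial σ A →ₐ[A] D) = Ideal.span {g} ∧
    ∀ s ∈ S, ∃ p q : MvPolynomial σ A, IsUnit (aeval y q) ∧ s * aeval y q = aeval y p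

variable {R A D : Type*} [CommRing R] [CommRing A] [CommRing D] [Algebra R A] [Algebra R D]
  [Algebra A D] [IsScalarTower R A D]

section UnitsIn

/-- The elements of a subalgebra `B` of `D` that are invertible in `D`. -/
def unitsIn (B : Subalgebra A D) : Submonoid B :=
  (IsUnit.submonoid D).comap (algebraMap B D)

/-- The inclusion into `D` of the localization of `B ⊆ D` at the elements invertible in `D`. -/
def unitsInLift (B : Subalgebra A D) : Localization (unitsIn B) →ₐ[B] D :=
  IsLocalization.liftAlgHom (M := unitsIn B) (f := Algebra.ofId B D) fun s ↦ s.2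

lemma unitsInLift_injective (B : Subalgebra A D) : Function.Injective (unitsInLift B) := by
  refine (IsLocalization.lift_injective_iff _).2 fun a b ↦ ⟨fun h ↦ ?_, fun h ↦ ?_⟩
  · have := congrArg (unitsInLift B) h
    rwa [AlgHom.commutes, AlgHom.commutes] at this
  · exact congrArg _ (Subtype.val_injective h)

lemma exists_unitsInLift_eq (B : Subalgebra A D) {s : D} {p q : B} (hq : IsUnit (q : D))
    (hs : s * q = p) : ∃ x, unitsInLift B x = s := by
  refine ⟨IsLocalization.mk' _ p (⟨q, hq⟩ : unitsIn B), hq.mul_right_cancel ?_⟩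
  have := congrArg (unitsInLift B) (IsLocalization.mk'_spec (Localization (unitsIn B)) p
    (⟨q, hq⟩ : unitsIn B))
  rw [map_mul, AlgHom.commutes, AlgHom.commutes] at this
  exact this.trans hs.symm

end UnitsIn

lemma exists_surjective_aeval_range {σ : Type*} (y : σ → D) :
    ∃ y' : σ → (aeval y : MvPolynomial σ A →ₐ[A] D).range,
      (∀ p : MvPolynomial σ A, (aeval y' p : D) = aeval y p) ∧
      Function.Surjective (aeval y' : MvPolynomial σ A →ₐ[A] _) ∧
      RingHom.ker (aeval y' : MvPolynomial σ A →ₐ[A] _) =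
        RingHom.ker (aeval y : MvPolynomial σ A →ₐ[A] D) := by
  set φ : MvPolynomial σ A →ₐ[A] D := aeval y
  have haeval : aeval (fun i ↦ φ.rangeRestrict (X i)) = φ.rangeRestrict :=
    (aeval_unique φ.rangeRestrict).symm
  refine ⟨fun i ↦ φ.rangeRestrict (X i), fun p ↦ ?_, ?_, ?_⟩
  · rw [haeval]
    rfl
  · rw [haeval]
    exact φ.rangeRestrict_surjective
  · rw [haeval]
    exact φ.ker_rangeRestrict

variable [IsDomain R] [IsDomain A] [Module.FaithfullyFlat A D] [Module.IsTorsionFree R D]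

lemma conormalPure_localization_range {σ : Type*} {y : σ → D} {g : MvPolynomial σ A}
    (hg : RingHom.ker (aeval y : MvPolynomial σ A →ₐ[A] D) = Ideal.span {g})
    [Module.Flat A (aeval y : MvPolynomial σ A →ₐ[A] D).range] :
    ConormalPure (IsScalarTower.toAlgHom R A
      (Localization (unitsIn (aeval y : MvPolynomial σ A →ₐ[A] D).range))) := by
  obtain ⟨y', -, hy', hker⟩ := exists_surjective_aeval_range (A := A) y
  set B := (aeval y : MvPolynomial σ A →ₐ[A] D).range
  rw [← hker] at hg
  let ι := (unitsInLift B).restrictScalars A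
  have hAB' : Function.Injective (algebraMap A (Localization (unitsIn B))) := by
    refine .of_comp (f := ι) ?_
    rw [← RingHom.coe_coe, ← RingHom.coe_comp, ι.comp_algebraMap]
    exact FaithfulSMul.algebraMap_injective A D
  have : Module.IsTorsionFree R B :=
    Subtype.val_injective.moduleIsTorsionFree (algebraMap B D) fun _ _ ↦ rfl
  have : Module.IsTorsionFree R (Localization (unitsIn B)) :=
    (unitsInLift_injective B).moduleIsTorsionFree _
      ((unitsInLift B).toLinearMap.restrictScalars R).map_smul
  refine ⟨conormalInjective_localization_hypersurface (D := D) hy' hg (unitsIn B)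
    (fun _ hs ↦ hs) hAB', fun hA ↦ ?_⟩
  have := isTorsionFree_h1Cotangent_hypersurface hy' hg hA
  have := Algebra.H1Cotangent.isLocalizedModule R (T := Localization (unitsIn B)) (unitsIn B)
  have := isTorsionFree_of_isLocalizedModule (R := R) (unitsIn B)
    (Algebra.H1Cotangent.map R R B (Localization (unitsIn B)))
  exact .of_isTorsionFree_h1Cotangent

theorem ExhaustedByHypersurfaces.conormalPure (hflat : ∀ B : Subalgebra A D, Module.Flat A B)
    (hAD : ExhaustedByHypersurfaces A D) : ConormalPure (IsScalarTower.toAlgHom R A D) := by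
  refine .of_forall_finset _ fun S ↦ ?_
  obtain ⟨σ, y, g, hg, hS⟩ := hAD S
  obtain ⟨y', hyy', -, -⟩ := exists_surjective_aeval_range (A := A) y
  set B := (aeval y : MvPolynomial σ A →ₐ[A] D).range
  have := hflat B
  let ι : Localization (unitsIn B) →ₐ[R] D := (unitsInLift B).restrictScalars R
  have hι : ι.comp (IsScalarTower.toAlgHom R A (Localization (unitsIn B))) =
      IsScalarTower.toAlgHom R A D :=
    AlgHom.ext ((unitsInLift B).restrictScalars A).commutes
  refine ⟨Localization (unitsIn B), _, _, ι, _, hι, unitsInLift_injective B, fun s hs ↦ ?_,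
    conormalPure_localization_range hg⟩
  obtain ⟨p, q, hq, hpq⟩ := hS s hs
  rw [← hyy'] at hq
  rw [← hyy', ← hyy'] at hpq
  exact exists_unitsInLift_eq B hq hpq

end HypersurfaceExhaustion

section HypersurfaceKernels

section Polynomial

open Polynomial

lemma isPrimitive_C_mul_X_sub_C {A : Type*} [CommRing A] [IsDomain A] {x c : A} (hx : Prime x)
    (hc : ¬ x ∣ c) : (C x * X - C c).IsPrimitive := by
  intro r hr
  have hcoeff := (C_dvd_iff_dvd_coeff r _).1 hr
  have hrx : r ∣ x := by simpa using hcoeff 1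
  have hrc : r ∣ c := by simpa using hcoeff 0
  obtain ⟨s, rfl⟩ := hrx
  exact (hx.irreducible.isUnit_or_isUnit rfl).resolve_right fun hs ↦
    hc ((hs.mul_right_dvd).2 hrc)

variable {A F M : Type*} [CommRing A] [IsDomain A] [IsGCDMonoid A] [Field F] [Algebra A F]
  [IsFractionRing A F] [Field M] [Algebra F M] [Algebra A M] [IsScalarTower A F M]

lemma aeval_eq_zero_iff_dvd_of_associated_minpoly {y : M} {g : A[X]} (hg : g.IsPrimitive)
    (hgy : Associated (g.map (algebraMap A F)) (minpoly F y)) (f : A[X]) :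
    aeval y f = 0 ↔ g ∣ f := by
  rw [hg.dvd_iff_fraction_map_dvd_fraction_map F, hgy.dvd_iff_dvd_left, minpoly.dvd_iff,
    aeval_map_algebraMap]

lemma exists_isPrimitive_associated_minpoly {y : M} (hy : IsIntegral F y) :
    ∃ g : A[X], g.IsPrimitive ∧ Associated (g.map (algebraMap A F)) (minpoly F y) := by
  let _ : NormalizedGCDMonoid A := Nonempty.some inferInstance
  set N := IsLocalization.integerNormalization (nonZeroDivisors A) (minpoly F y)
  obtain ⟨b, hb, hbN⟩ :=
    IsLocalization.integerNormalization_spec (nonZeroDivisors A) (minpoly F y)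
  have hb0 : algebraMap A F b ≠ 0 := IsFractionRing.to_map_ne_zero_of_mem_nonZeroDivisors hb
  have hN0 : N ≠ 0 := IsFractionRing.integerNormalization_eq_zero_iff.not.2 (minpoly.ne_zero hy)
  have : FaithfulSMul A M := FaithfulSMul.trans A F M
  have hyN : aeval y N.primPart = 0 := aeval_primPart_eq_zero hN0
    (IsLocalization.integerNormalization_aeval_eq_zero _ _ (minpoly.aeval F y))
  refine ⟨N.primPart, N.isPrimitive_primPart, associated_of_dvd_dvd ?_ ?_⟩
  · have hdvd := Polynomial.map_dvd (algebraMap A F) N.primPart_dvd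
    rw [hbN, Algebra.smul_def, IsScalarTower.algebraMap_apply A F F[X]] at hdvd
    exact ((isUnit_C.2 hb0.isUnit).dvd_mul_left).1 hdvd
  · exact minpoly.dvd F y ((aeval_map_algebraMap F y _).trans hyN)

lemma exists_forall_aeval_eq_zero_iff_dvd [FaithfulSMul A M] (y : M) :
    ∃ g : A[X], ∀ f : A[X], aeval y f = 0 ↔ g ∣ f := by
  let _ := FractionRing.liftAlgebra A M
  by_cases hy : IsIntegral (FractionRing A) y
  · obtain ⟨g, hg, hgy⟩ := exists_isPrimitive_associated_minpoly (A := A) hy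
    exact ⟨g, aeval_eq_zero_iff_dvd_of_associated_minpoly hg hgy⟩
  · have hyA : Transcendental A y := fun h ↦
      hy ((IsFractionRing.isAlgebraic_iff A (FractionRing A) M).1 h).isIntegral
    exact ⟨0, fun f ↦ ⟨fun h ↦ zero_dvd_iff.2 (transcendental_iff.1 hyA f h),
      fun h ↦ by rw [zero_dvd_iff.1 h, map_zero]⟩⟩

lemma aeval_eq_zero_iff_C_mul_X_sub_C_dvd [FaithfulSMul A M] {x c : A} (hx : Prime x)
    (hc : ¬ x ∣ c) {w : M} (hw : algebraMap A M x * w = algebraMap A M c) (f : A[X]) :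
    aeval w f = 0 ↔ C x * X - C c ∣ f := by
  let _ := FractionRing.liftAlgebra A M
  set j := algebraMap A (FractionRing A)
  have hx0 : j x ≠ 0 := IsFractionRing.to_map_eq_zero_iff.not.2 hx.ne_zero
  have hxM : algebraMap A M x ≠ 0 :=
    (FaithfulSMul.algebraMap_eq_zero_iff A M).not.2 hx.ne_zero
  have hwF : w = algebraMap (FractionRing A) M (j c / j x) := by
    rw [map_div₀, ← IsScalarTower.algebraMap_apply, ← IsScalarTower.algebraMap_apply,
      eq_div_iff hxM, mul_comm, hw]
  refine aeval_eq_zero_iff_dvd_of_associated_minpoly (F := FractionRing A)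
    (isPrimitive_C_mul_X_sub_C hx hc) ?_ f
  have hmap : (C x * X - C c).map j = C (j x) * (X - C (j c / j x)) := by
    rw [mul_sub, ← C_mul, mul_div_cancel₀ _ hx0, Polynomial.map_sub, Polynomial.map_mul, map_C,
      map_C, map_X]
  rw [hwF, minpoly.eq_X_sub_C, hmap]
  exact associated_unit_mul_left _ _ (isUnit_C.2 hx0.isUnit)

end Polynomial

open MvPolynomial

variable {A M : Type*} [CommRing A] [Field M] [Algebra A M]

lemma ker_aeval_const_eq_span {y : M} {g : Polynomial A}
    (hg : ∀ f : Polynomial A, Polynomial.aeval y f = 0 ↔ g ∣ f) :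
    RingHom.ker (aeval (fun _ : PUnit ↦ y) : MvPolynomial PUnit A →ₐ[A] M) =
      Ideal.span {(uniqueAlgEquiv A PUnit).symm g} := by
  ext f
  have heval : aeval (fun _ : PUnit ↦ y) f = Polynomial.aeval y (uniqueAlgEquiv A PUnit f) :=
    eval₂_const_uniqueAlgEquiv.symm
  rw [RingHom.mem_ker, Ideal.mem_span_singleton, heval, hg,
    ← map_dvd_iff (uniqueAlgEquiv A PUnit), AlgEquiv.apply_symm_apply]

lemma ker_aeval_pair_eq_span [IsDomain A] [IsGCDMonoid A] {u w : M} (hu : Transcendental A u)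
    {c : A} (hc : c ≠ 0) (huw : u * w = algebraMap A M c) :
    RingHom.ker (aeval ![u, w] : MvPolynomial (Fin 2) A →ₐ[A] M) =
      Ideal.span {X 0 * X 1 - C c} := by
  let _ : Algebra (Polynomial A) M := (Polynomial.aeval (R := A) u).toAlgebra
  have : FaithfulSMul (Polynomial A) M :=
    (faithfulSMul_iff_algebraMap_injective _ _).2 (transcendental_iff_injective.1 hu)
  have : IsScalarTower A (Polynomial A) M :=
    .of_algebraMap_eq fun a ↦ ((Polynomial.aeval u).commutes a).symm
  have hmap (p : Polynomial A) : algebraMap (Polynomial A) M p = Polynomial.aeval u p := rfl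
  set e := Polynomial.Bivariate.equivMvPolynomial A
  have heval : (aeval ![u, w] : MvPolynomial (Fin 2) A →ₐ[A] M) =
      ((Polynomial.aeval (R := Polynomial A) w).restrictScalars A).comp e.symm.toAlgHom := by
    refine algHom_ext (Fin.forall_fin_two.2 ⟨?_, ?_⟩)
    · have h : e.symm (X 0) = Polynomial.C Polynomial.X :=
        Polynomial.Bivariate.equivMvPolynomial_symm_X_0
      change aeval ![u, w] (X 0) = Polynomial.aeval w (e.symm (X 0))
      rw [h, Polynomial.aeval_C, hmap, Polynomial.aeval_X, aeval_X]
      rfl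
    · have h : e.symm (X 1) = Polynomial.X := Polynomial.Bivariate.equivMvPolynomial_symm_X_1
      change aeval ![u, w] (X 1) = Polynomial.aeval w (e.symm (X 1))
      rw [h, Polynomial.aeval_X, aeval_X]
      rfl
  have hX : ¬ (Polynomial.X : Polynomial A) ∣ Polynomial.C c := by
    rwa [Polynomial.X_dvd_iff, Polynomial.coeff_C_zero]
  have huw' : algebraMap (Polynomial A) M Polynomial.X * w =
      algebraMap (Polynomial A) M (Polynomial.C c) := by
    rw [hmap, hmap, Polynomial.aeval_X, Polynomial.aeval_C, huw]
  ext f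
  have hg : e.symm (X 0 * X 1 - C c) =
      Polynomial.C Polynomial.X * Polynomial.X - Polynomial.C (Polynomial.C c) := by
    rw [map_sub, map_mul, Polynomial.Bivariate.equivMvPolynomial_symm_X_0,
      Polynomial.Bivariate.equivMvPolynomial_symm_X_1,
      Polynomial.Bivariate.equivMvPolynomial_symm_C]
  rw [RingHom.mem_ker, Ideal.mem_span_singleton, ← map_dvd_iff e.symm, hg, heval]
  exact aeval_eq_zero_iff_C_mul_X_sub_C_dvd Polynomial.prime_X hX huw' _

end HypersurfaceKernels

section HypersurfaceSteps

open Polynomial NNReal Filter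

variable {A M : Type*} [CommRing A] [Field M] [Algebra A M]

/-- The subalgebra of all quotients `b / u` of elements of `B` with `v u = 1`: the localization
of `B` at its elements of value one. -/
def unitFractions (v : Valuation M ℝ≥0) (B : Subalgebra A M) : Subalgebra A M where
  carrier := {s | ∃ b ∈ B, ∃ u ∈ B, v u = 1 ∧ s * u = b}
  mul_mem' := by
    rintro s t ⟨_, hb, u, hu, hvu, rfl⟩ ⟨_, hb', u', hu', hvu', rfl⟩
    exact ⟨_, B.mul_mem hb hb', u * u', B.mul_mem hu hu', by rw [map_mul, hvu, hvu', one_mul],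
      by ring⟩
  add_mem' := by
    rintro s t ⟨_, hb, u, hu, hvu, rfl⟩ ⟨_, hb', u', hu', hvu', rfl⟩
    exact ⟨_, B.add_mem (B.mul_mem hb hu') (B.mul_mem hb' hu), u * u', B.mul_mem hu hu',
      by rw [map_mul, hvu, hvu', one_mul], by ring⟩
  algebraMap_mem' r := ⟨_, B.algebraMap_mem r, 1, B.one_mem, map_one v, mul_one _⟩

/-- Every finite set of elements of `F'` of value at most one lies in `unitFractions v B` for a
subalgebra `B` of the form `A[σ] / (g)` that is generated by such elements. If `F'` is a subfield
with ring of integers `D`, this says that `D` is exhausted by hypersurfaces over `A`. -/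
def IsHypersurfaceStep (v : Valuation M ℝ≥0) (A : Type*) [CommRing A] [Algebra A M]
    (F' : Set M) : Prop :=
  ∀ S : Finset M, (∀ s ∈ S, s ∈ F' ∧ v s ≤ 1) → ∃ (σ : Type) (y : σ → M) (g : MvPolynomial σ A),
    (∀ i, y i ∈ F' ∧ v (y i) ≤ 1) ∧
    RingHom.ker (MvPolynomial.aeval y : MvPolynomial σ A →ₐ[A] M) = Ideal.span {g} ∧
    ∀ s ∈ S, s ∈ unitFractions v (MvPolynomial.aeval y : MvPolynomial σ A →ₐ[A] M).range

/-- `s` is the product of an element of `T` and an element of value one which is eventually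
contained in `unitFractions v (B i)`. -/
def IsEventuallyMonomial {ι : Type*} (v : Valuation M ℝ≥0) (l : Filter ι)
    (B : ι → Subalgebra A M) (T : Submonoid M) (s : M) : Prop :=
  ∃ m ∈ T, ∃ w, v w = 1 ∧ (∀ᶠ i in l, w ∈ unitFractions v (B i)) ∧ s = m * w

variable {v : Valuation M ℝ≥0}

section UnitFractions

variable {B : Subalgebra A M}

lemma le_unitFractions : B ≤ unitFractions v B := fun b hb ↦
  ⟨b, hb, 1, B.one_mem, map_one v, mul_one b⟩

lemma inv_mem_unitFractions {w : M} (hw : w ∈ unitFractions v B) (hvw : v w = 1) :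
    w⁻¹ ∈ unitFractions v B := by
  obtain ⟨_, hb, u, hu, hvu, rfl⟩ := hw
  have hw0 : w ≠ 0 := v.ne_zero_iff.1 (hvw.trans_ne one_ne_zero)
  exact ⟨u, hu, w * u, hb, by rw [map_mul, hvw, hvu, one_mul], inv_mul_cancel_left₀ hw0 u⟩

end UnitFractions

namespace IsEventuallyMonomial

variable {ι : Type*} {l : Filter ι} {B : ι → Subalgebra A M} {T : Submonoid M} {s t : M}

lemma of_mem (hs : s ∈ T) : IsEventuallyMonomial v l B T s :=
  ⟨s, hs, 1, map_one v, .of_forall fun _ ↦ one_mem _, (mul_one s).symm⟩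

lemma mul (hs : IsEventuallyMonomial v l B T s) (ht : IsEventuallyMonomial v l B T t) :
    IsEventuallyMonomial v l B T (s * t) := by
  obtain ⟨m, hm, w, hw, hwB, rfl⟩ := hs
  obtain ⟨m', hm', w', hw', hwB', rfl⟩ := ht
  refine ⟨m * m', mul_mem hm hm', w * w', by rw [map_mul, hw, hw', one_mul], ?_,
    mul_mul_mul_comm _ _ _ _⟩
  filter_upwards [hwB, hwB'] with i h h' using mul_mem h h'

lemma inv (hT : ∀ m ∈ T, m⁻¹ ∈ T) (hs : IsEventuallyMonomial v l B T s) :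
    IsEventuallyMonomial v l B T s⁻¹ := by
  obtain ⟨m, hm, w, hw, hwB, rfl⟩ := hs
  exact ⟨m⁻¹, hT m hm, w⁻¹, by rw [map_inv₀, hw, inv_one],
    hwB.mono fun i hi ↦ inv_mem_unitFractions hi hw, mul_inv _ _⟩

lemma multiset_prod (E : Multiset M) (hE : ∀ z ∈ E, IsEventuallyMonomial v l B T z) :
    IsEventuallyMonomial v l B T E.prod := by
  induction E using Multiset.induction_on with
  | empty => exact of_mem T.one_mem
  | cons z E ih =>
    rw [Multiset.prod_cons]
    exact (hE z (Multiset.mem_cons_self z E)).mul (ih fun w hw ↦ hE w (Multiset.mem_cons_of_mem hw))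

lemma aeval_of_splits {F : Type*} [Field F] [Algebra F M] {x : M} {p : F[X]} (hp : p.Splits)
    (hT : ∀ k : F, algebraMap F M k ∈ T)
    (hx : ∀ e : F, IsEventuallyMonomial v l B T (x - algebraMap F M e)) :
    IsEventuallyMonomial v l B T (aeval x p) := by
  rw [hp.eq_prod_roots, map_mul, aeval_C, map_multiset_prod, Multiset.map_map]
  refine (of_mem (hT _)).mul (multiset_prod _ fun z hz ↦ ?_)
  obtain ⟨e, -, rfl⟩ := Multiset.mem_map.1 hz
  simpa using hx e

lemma eventually_mem_unitFractions (hs : IsEventuallyMonomial v l B T s)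
    (hT : ∀ m ∈ T, v m ≤ 1 → ∀ᶠ i in l, m ∈ B i) (hvs : v s ≤ 1) :
    ∀ᶠ i in l, s ∈ unitFractions v (B i) := by
  obtain ⟨m, hm, w, hw, hwB, rfl⟩ := hs
  rw [map_mul, hw, mul_one] at hvs
  filter_upwards [hT m hm hvs, hwB] with i hmi hwi using mul_mem (le_unitFractions hmi) hwi

end IsEventuallyMonomial

variable {F : Type*} [Field F] [Algebra F M]

lemma eventually_mem_unitFractions_of_splits {ι : Type*} {l : Filter ι} {B : ι → Subalgebra A M}
    {T : Submonoid M} (hTF : ∀ k : F, algebraMap F M k ∈ T) (hTinv : ∀ m ∈ T, m⁻¹ ∈ T)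
    (hTB : ∀ m ∈ T, v m ≤ 1 → ∀ᶠ i in l, m ∈ B i) {x : M}
    (hx : ∀ e : F, IsEventuallyMonomial v l B T (x - algebraMap F M e)) {p q : F[X]}
    (hp : p.Splits) (hq : q.Splits) (hpq : v (aeval x p / aeval x q) ≤ 1) :
    ∀ᶠ i in l, aeval x p / aeval x q ∈ unitFractions v (B i) := by
  rw [div_eq_mul_inv] at hpq ⊢
  exact ((IsEventuallyMonomial.aeval_of_splits hp hTF hx).mul
    ((IsEventuallyMonomial.aeval_of_splits hq hTF hx).inv hTinv)).eventually_mem_unitFractions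
      hTB hpq

/-- The filter on `F` of increasingly good approximations of `x`: its members contain all `a`
at least as close to `x` as some given `e`. -/
def approximations (v : Valuation M ℝ≥0) (F : Type*) [Field F] [Algebra F M] (x : M) : Filter F :=
  ⨅ e : F, 𝓟 {a : F | v (x - algebraMap F M a) ≤ v (x - algebraMap F M e)}

instance neBot_approximations (x : M) : (approximations v F x).NeBot := by
  refine iInf_neBot_of_directed' (fun e e' ↦ ?_) fun e ↦ principal_neBot_iff.2 ⟨e, le_refl (v _)⟩
  rcases le_total (v (x - algebraMap F M e)) (v (x - algebraMap F M e')) with h | h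
  · exact ⟨e, le_rfl, principal_mono.2 fun a ha ↦ le_trans ha h⟩
  · exact ⟨e', principal_mono.2 fun a ha ↦ le_trans ha h, le_rfl⟩

lemma eventually_valuation_sub_le (x : M) (e : F) :
    ∀ᶠ a in approximations v F x, v (x - algebraMap F M a) ≤ v (x - algebraMap F M e) :=
  mem_iInf_of_mem e (mem_principal_self _)

variable [Algebra A F] [IsScalarTower A F M] (hA : (v.comap (algebraMap F M)).Integers A)
include hA

lemma algebraMap_mem_of_valuation_le_one (B : Subalgebra A M) {k : F}
    (hk : v (algebraMap F M k) ≤ 1) : algebraMap F M k ∈ B := by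
  obtain ⟨a, rfl⟩ := hA.exists_of_le_one hk
  rw [← IsScalarTower.algebraMap_apply]
  exact B.algebraMap_mem a

lemma faithfulSMul_of_integers : FaithfulSMul A M := by
  have : FaithfulSMul A F := (faithfulSMul_iff_algebraMap_injective A F).2 hA.hom_inj
  exact FaithfulSMul.trans A F M

lemma div_mem_adjoin_of_valuation_sub_le {x : M} {a e c m : F} (hm : m ≠ 0) (hc : c ≠ 0)
    (hac : v (x - algebraMap F M a) = v (algebraMap F M c))
    (hem : v (x - algebraMap F M e) = v (algebraMap F M m))
    (hae : v (x - algebraMap F M a) ≤ v (x - algebraMap F M e)) :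
    (x - algebraMap F M e) / algebraMap F M m ∈
      Algebra.adjoin A {(x - algebraMap F M a) / algebraMap F M c} := by
  have hm' : algebraMap F M m ≠ 0 := (_root_.map_ne_zero _).2 hm
  have hc' : algebraMap F M c ≠ 0 := (_root_.map_ne_zero _).2 hc
  have hmem {k : F} (hk : v (algebraMap F M k) ≤ v (algebraMap F M m)) :
      algebraMap F M (k / m) ∈ Algebra.adjoin A {(x - algebraMap F M a) / algebraMap F M c} :=
    algebraMap_mem_of_valuation_le_one hA _ (by
      rw [map_div₀, map_div₀]; exact div_le_one_of_le₀ hk zero_le)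
  have hsub : v (algebraMap F M (a - e)) ≤ v (algebraMap F M m) := by
    have heq : algebraMap F M (a - e) = (x - algebraMap F M e) - (x - algebraMap F M a) := by
      rw [map_sub]; ring
    rw [heq, ← hem]
    exact Valuation.map_sub_le _ le_rfl hae
  have heq : (x - algebraMap F M e) / algebraMap F M m =
      algebraMap F M (c / m) * ((x - algebraMap F M a) / algebraMap F M c) +
        algebraMap F M ((a - e) / m) := by
    rw [map_div₀, map_div₀, map_sub]; field_simp; ring
  rw [heq]
  exact add_mem (mul_mem (hmem (by rw [← hac, ← hem]; exact hae))
    (Algebra.self_mem_adjoin_singleton A _)) (hmem hsub)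

variable [IsDomain A]

lemma isHypersurfaceStep_of_eventually_adjoin {F' : Set M} {ι : Type*} (l : Filter ι) [l.NeBot]
    (y : ι → M) (hy : ∀ᶠ i in l, y i ∈ F' ∧ v (y i) ≤ 1)
    (h : ∀ s ∈ F', v s ≤ 1 → ∀ᶠ i in l, s ∈ unitFractions v (Algebra.adjoin A {y i})) :
    IsHypersurfaceStep v A F' := by
  intro S hS
  have hSl : ∀ᶠ i in l, ∀ s ∈ S, s ∈ unitFractions v (Algebra.adjoin A {y i}) :=
    (eventually_all_finset S).2 fun s hs ↦ h s (hS s hs).1 (hS s hs).2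
  obtain ⟨i, hyi, hSi⟩ := (hy.and hSl).exists
  have := ValuationRing.of_integers _ hA
  have := faithfulSMul_of_integers hA
  obtain ⟨g, hg⟩ := exists_forall_aeval_eq_zero_iff_dvd (A := A) (y i)
  refine ⟨PUnit, fun _ ↦ y i, _, fun _ ↦ hyi, ker_aeval_const_eq_span hg, ?_⟩
  rwa [← Algebra.adjoin_range_eq_range_aeval, Set.range_const]

section Immediate

variable {x : M}

lemma isHypersurfaceStep_of_forall_valuation_sub_eq {F' : IntermediateField F M} (hxF' : x ∈ F')
    (hx : ∀ a : F, algebraMap F M a ≠ x)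
    (hval : ∀ a : F, ∃ c : F, v (x - algebraMap F M a) = v (algebraMap F M c))
    (hrep : ∀ s ∈ F', ∃ p q : F[X], p.Splits ∧ q.Splits ∧ s = aeval x p / aeval x q) :
    IsHypersurfaceStep v A (F' : Set M) := by
  choose c hc using hval
  have hvc (a : F) : v (algebraMap F M (c a)) ≠ 0 := by
    rw [← hc, v.ne_zero_iff, sub_ne_zero]
    exact (hx a).symm
  have hc0 (a : F) : c a ≠ 0 := fun h ↦ hvc a (by rw [h, map_zero, map_zero])
  have hvy (a : F) : v ((x - algebraMap F M a) / algebraMap F M (c a)) = 1 := by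
    rw [map_div₀, hc, div_self (hvc a)]
  refine isHypersurfaceStep_of_eventually_adjoin hA (approximations v F x)
    (fun a ↦ (x - algebraMap F M a) / algebraMap F M (c a)) (.of_forall fun a ↦
      ⟨div_mem (sub_mem hxF' (F'.algebraMap_mem a)) (F'.algebraMap_mem _), (hvy a).le⟩) ?_
  intro s hs hvs
  obtain ⟨p, q, hp, hq, rfl⟩ := hrep s hs
  refine eventually_mem_unitFractions_of_splits
    (T := MonoidHom.mrange (algebraMap F M : F →* M)) (fun k ↦ ⟨k, rfl⟩) ?_ ?_ ?_ hp hq hvs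
  · rintro _ ⟨k, rfl⟩
    exact ⟨k⁻¹, map_inv₀ (algebraMap F M) k⟩
  · rintro _ ⟨k, rfl⟩ hk
    exact .of_forall fun a ↦ algebraMap_mem_of_valuation_le_one hA _ hk
  · intro e
    refine ⟨_, ⟨c e, rfl⟩, _, hvy e, ?_, (mul_div_cancel₀ _ (v.ne_zero_iff.1 (hvc e))).symm⟩
    filter_upwards [eventually_valuation_sub_le x e] with a ha
    exact le_unitFractions
      (div_mem_adjoin_of_valuation_sub_le hA (hc0 e) (hc0 a) (hc a) (hc e) ha)

end Immediate

end HypersurfaceSteps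

section TranscendentalSteps

open Polynomial NNReal Filter Topology

variable {A M F : Type*} [Field M] [Field F] [Algebra F M]

/-- The filter on `F` of elements whose value tends to that of `y` from above. -/
def valuesAbove (v : Valuation M ℝ≥0) (F : Type*) [Field F] [Algebra F M] (y : M) : Filter F :=
  comap (fun c ↦ v (algebraMap F M c)) (𝓝[>] (v y))

/-- The elements `k * y ^ n` with `k` in `F` and `n` an integer. -/
def laurentMonomials (F : Type*) [Field F] [Algebra F M] {y : M} (hy : y ≠ 0) : Submonoid M where
  carrier := {m | ∃ (k : F) (n : ℤ), m = algebraMap F M k * y ^ n}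
  one_mem' := ⟨1, 0, by rw [map_one, zpow_zero, mul_one]⟩
  mul_mem' := by
    rintro _ _ ⟨k, n, rfl⟩ ⟨k', n', rfl⟩
    exact ⟨k * k', n + n', by rw [map_mul, zpow_add₀ hy]; ring⟩

variable {v : Valuation M ℝ≥0}

lemma inv_mem_laurentMonomials {y : M} (hy : y ≠ 0) (m : M) (hm : m ∈ laurentMonomials F hy) :
    m⁻¹ ∈ laurentMonomials F hy := by
  obtain ⟨k, n, rfl⟩ := hm
  exact ⟨k⁻¹, -n, by rw [mul_inv, map_inv₀, zpow_neg]⟩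

lemma neBot_valuesAbove (hd : DenseRange fun c : F ↦ v (algebraMap F M c)) (y : M) :
    (valuesAbove v F y).NeBot := by
  refine comap_neBot_iff.2 fun t ht ↦ ?_
  obtain ⟨u, hu, hut⟩ := (mem_nhdsGT_iff_exists_Ioo_subset' (lt_add_one (v y))).1 ht
  obtain ⟨_, ⟨c, rfl⟩, hc⟩ := hd.exists_between hu
  exact ⟨c, hut hc⟩

lemma eventually_lt_valuesAbove (v : Valuation M ℝ≥0) (F : Type*) [Field F] [Algebra F M] (y : M) :
    ∀ᶠ c in valuesAbove v F y, v y < v (algebraMap F M c) :=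
  tendsto_comap.eventually self_mem_nhdsWithin

lemma algebraMap_ne_zero_of_lt {y : M} {c : F} (hc : v y < v (algebraMap F M c)) :
    algebraMap F M c ≠ 0 :=
  v.ne_zero_iff.1 (zero_le.trans_lt hc).ne'

lemma valuation_div_le_one_of_lt {y : M} {c : F} (hc : v y < v (algebraMap F M c)) :
    v (y / algebraMap F M c) ≤ 1 := by
  rw [map_div₀]
  exact div_le_one_of_le₀ hc.le zero_le

lemma valuation_inv_pow_ne {y : M} {i : ℕ} (hy : ∀ c : F, v y ^ i ≠ v (algebraMap F M c)) (c : F) :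
    v y⁻¹ ^ i ≠ v (algebraMap F M c) := by
  intro h
  refine hy c⁻¹ ?_
  rw [map_inv₀, map_inv₀, ← h, map_inv₀, inv_pow, inv_inv]

variable [CommRing A] [Algebra A M] [Algebra A F] [IsScalarTower A F M]
  (hA : (v.comap (algebraMap F M)).Integers A)
include hA

lemma eventually_mul_pow_mem_adjoin {y : M} {k : F} {j : ℕ}
    (hy : j ≠ 0 → ∀ c : F, v y ^ j ≠ v (algebraMap F M c)) (hk : v (algebraMap F M k * y ^ j) ≤ 1) :
    ∀ᶠ c in valuesAbove v F y,
      algebraMap F M k * y ^ j ∈ Algebra.adjoin A {y / algebraMap F M c} := by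
  rw [map_mul, map_pow] at hk
  have hle : ∀ᶠ t in 𝓝[>] (v y), v (algebraMap F M k) * t ^ j ≤ 1 := by
    by_cases hj : j = 0
    · subst hj
      exact .of_forall fun t ↦ by rwa [pow_zero] at hk ⊢
    · have hlt : v (algebraMap F M k) * v y ^ j < 1 := by
        refine lt_of_le_of_ne hk fun h ↦ hy hj k⁻¹ ?_
        rw [map_inv₀, map_inv₀]
        exact eq_inv_of_mul_eq_one_right h
      have hcont : Continuous fun t : ℝ≥0 ↦ v (algebraMap F M k) * t ^ j := by fun_prop
      exact nhdsWithin_le_nhds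
        (((hcont.tendsto _).eventually_lt_const hlt).mono fun t ht ↦ ht.le)
  filter_upwards [tendsto_comap.eventually hle, eventually_lt_valuesAbove v F y] with c hkc hyc
  have hc0 := algebraMap_ne_zero_of_lt hyc
  have heq : algebraMap F M k * y ^ j =
      algebraMap F M (k * c ^ j) * (y / algebraMap F M c) ^ j := by
    rw [map_mul, map_pow, div_pow]; field_simp
  rw [heq]
  refine mul_mem (algebraMap_mem_of_valuation_le_one hA _ ?_)
    (pow_mem (Algebra.self_mem_adjoin_singleton A _) j)
  rwa [map_mul, map_pow, map_mul, map_pow]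

section Gap

variable {x y : M} (hy : ∀ i ≠ 0, ∀ c : F, v y ^ i ≠ v (algebraMap F M c))
include hy

lemma eventually_mul_zpow_mem_adjoin_pair {k : F} {n : ℤ}
    (hk : v (algebraMap F M k * y ^ n) ≤ 1) :
    ∀ᶠ c in valuesAbove v F y ×ˢ valuesAbove v F y⁻¹, algebraMap F M k * y ^ n ∈
      Algebra.adjoin A (Set.range ![y / algebraMap F M c.1, y⁻¹ / algebraMap F M c.2]) := by
  obtain ⟨j, rfl | rfl⟩ := n.eq_nat_or_neg
  · rw [zpow_natCast] at hk ⊢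
    refine (tendsto_fst.eventually (eventually_mul_pow_mem_adjoin hA (hy j) hk)).mono fun c hc ↦ ?_
    exact Algebra.adjoin_mono (Set.singleton_subset_iff.2 (Set.mem_range_self (0 : Fin 2))) hc
  · rw [zpow_neg, zpow_natCast, ← inv_pow] at hk ⊢
    refine (tendsto_snd.eventually (eventually_mul_pow_mem_adjoin hA
      (fun hj ↦ valuation_inv_pow_ne (hy j hj)) hk)).mono fun c hc ↦ ?_
    exact Algebra.adjoin_mono (Set.singleton_subset_iff.2 (Set.mem_range_self (1 : Fin 2))) hc

lemma isEventuallyMonomial_add_algebraMap (hy0 : y ≠ 0) (b : F) :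
    IsEventuallyMonomial v (valuesAbove v F y ×ˢ valuesAbove v F y⁻¹)
      (fun c ↦ Algebra.adjoin A (Set.range ![y / algebraMap F M c.1, y⁻¹ / algebraMap F M c.2]))
      (laurentMonomials F hy0) (y + algebraMap F M b) := by
  have hne : v y ≠ v (algebraMap F M b) := fun h ↦ hy 1 one_ne_zero b (by rwa [pow_one])
  have key {k : F} {n : ℤ} (hk : v (algebraMap F M k * y ^ n) < 1) :
      v (1 + algebraMap F M k * y ^ n) = 1 ∧
      ∀ᶠ c in valuesAbove v F y ×ˢ valuesAbove v F y⁻¹, 1 + algebraMap F M k * y ^ n ∈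
        unitFractions v (Algebra.adjoin A
          (Set.range ![y / algebraMap F M c.1, y⁻¹ / algebraMap F M c.2])) :=
    ⟨Valuation.map_one_add_of_lt _ hk, (eventually_mul_zpow_mem_adjoin_pair hA hy hk.le).mono
      fun c hc ↦ add_mem (one_mem _) (le_unitFractions hc)⟩
  rcases lt_or_gt_of_ne hne with h | h
  · have hb := algebraMap_ne_zero_of_lt h
    obtain ⟨hw, hwB⟩ := key (k := b⁻¹) (n := 1) (by
      rw [map_inv₀, zpow_one, map_mul, map_inv₀, inv_mul_lt_one₀ (zero_le.trans_lt h)]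
      exact h)
    refine ⟨_, ⟨b, 0, rfl⟩, _, hw, hwB, ?_⟩
    rw [map_inv₀, zpow_zero, zpow_one, mul_one, mul_add, mul_one, mul_inv_cancel_left₀ hb, add_comm]
  · obtain ⟨hw, hwB⟩ := key (k := b) (n := -1) (by
      rw [zpow_neg_one, map_mul, map_inv₀, mul_inv_lt_iff₀ (zero_le.trans_lt h), one_mul]
      exact h)
    refine ⟨_, ⟨1, 1, rfl⟩, _, hw, hwB, ?_⟩
    rw [map_one, one_mul, zpow_one, zpow_neg_one, mul_add, mul_one, mul_left_comm,
      mul_inv_cancel₀ hy0, mul_one]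

lemma eventually_mem_unitFractions_of_gap (hy0 : y ≠ 0) {a : F} (hya : y = x - algebraMap F M a)
    {p q : F[X]} (hp : p.Splits) (hq : q.Splits) (hpq : v (aeval x p / aeval x q) ≤ 1) :
    ∀ᶠ c in valuesAbove v F y ×ˢ valuesAbove v F y⁻¹, aeval x p / aeval x q ∈
      unitFractions v (Algebra.adjoin A
        (Set.range ![y / algebraMap F M c.1, y⁻¹ / algebraMap F M c.2])) := by
  refine eventually_mem_unitFractions_of_splits (T := laurentMonomials F hy0)
    (fun k ↦ ⟨k, 0, by rw [zpow_zero, mul_one]⟩) (inv_mem_laurentMonomials hy0) ?_ ?_ hp hq hpq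
  · rintro _ ⟨k, n, rfl⟩ hkn
    exact eventually_mul_zpow_mem_adjoin_pair hA hy hkn
  · intro e
    have heq : x - algebraMap F M e = y + algebraMap F M (a - e) := by rw [hya, map_sub]; ring
    rw [heq]
    exact isEventuallyMonomial_add_algebraMap hA hy hy0 (a - e)

end Gap

lemma exists_ker_aeval_pair_eq_span [IsDomain A] {y : M} (hy0 : y ≠ 0) (hy : Transcendental F y)
    {c d : F} (hc : v y < v (algebraMap F M c)) (hd : v y⁻¹ < v (algebraMap F M d)) :
    ∃ g, RingHom.ker (MvPolynomial.aeval ![y / algebraMap F M c, y⁻¹ / algebraMap F M d] :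
      MvPolynomial (Fin 2) A →ₐ[A] M) = Ideal.span {g} := by
  have hc0 := algebraMap_ne_zero_of_lt hc
  have hd0 := algebraMap_ne_zero_of_lt hd
  have hprod : y / algebraMap F M c * (y⁻¹ / algebraMap F M d) = algebraMap F M (c * d)⁻¹ := by
    rw [map_inv₀, map_mul]; field_simp
  obtain ⟨r, hr⟩ := hA.exists_of_le_one (r := (c * d)⁻¹) (by
    rw [Valuation.comap_apply, ← hprod, map_mul]
    exact mul_le_one' (valuation_div_le_one_of_lt hc) (valuation_div_le_one_of_lt hd))
  have hr0 : r ≠ 0 := by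
    rintro rfl
    rw [map_zero, eq_comm, inv_eq_zero] at hr
    exact mul_ne_zero hc0 hd0 (by rw [← map_mul, hr, map_zero])
  have hyc : Transcendental F (y / algebraMap F M c) := fun h ↦ hy (by
    simpa [div_mul_cancel₀ _ hc0] using h.mul (isAlgebraic_algebraMap c))
  have := ValuationRing.of_integers _ hA
  refine ⟨_, ker_aeval_pair_eq_span
    (fun h ↦ hyc (h.extendScalars hA.hom_inj)) hr0 ?_⟩
  rw [hprod, ← hr, ← IsScalarTower.algebraMap_apply]

lemma isHypersurfaceStep_of_transcendental [IsDomain A] {x : M} {F' : IntermediateField F M}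
    (hxF' : x ∈ F') (hx : Transcendental F x) {a : F}
    (hgap : ∀ i ≠ 0, ∀ c : F, v (x - algebraMap F M a) ^ i ≠ v (algebraMap F M c))
    (hd : DenseRange fun c : F ↦ v (algebraMap F M c))
    (hrep : ∀ s ∈ F', ∃ p q : F[X], p.Splits ∧ q.Splits ∧ s = aeval x p / aeval x q) :
    IsHypersurfaceStep v A (F' : Set M) := by
  intro S hS
  obtain ⟨y, hya⟩ : ∃ y, y = x - algebraMap F M a := ⟨_, rfl⟩
  rw [← hya] at hgap
  have hyF' : y ∈ F' := hya ▸ sub_mem hxF' (F'.algebraMap_mem a)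
  have hytr : Transcendental F y := fun h ↦ hx (by
    simpa [hya] using h.add (isAlgebraic_algebraMap a))
  have hy0 : y ≠ 0 := fun h ↦ hytr (h ▸ isAlgebraic_zero)
  have hSl : ∀ᶠ c in valuesAbove v F y ×ˢ valuesAbove v F y⁻¹, ∀ s ∈ S, s ∈ unitFractions v
      (Algebra.adjoin A (Set.range ![y / algebraMap F M c.1, y⁻¹ / algebraMap F M c.2])) := by
    refine (eventually_all_finset S).2 fun s hs ↦ ?_
    obtain ⟨hsF', hvs⟩ := hS s hs
    obtain ⟨p, q, hp, hq, rfl⟩ := hrep s hsF'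
    exact eventually_mem_unitFractions_of_gap hA hgap hy0 hya hp hq hvs
  have := neBot_valuesAbove hd y
  have := neBot_valuesAbove hd y⁻¹
  obtain ⟨⟨c, d⟩, hcd, hc, hd⟩ := (hSl.and ((tendsto_fst.eventually
    (eventually_lt_valuesAbove v F y)).and (tendsto_snd.eventually
    (eventually_lt_valuesAbove v F y⁻¹)))).exists
  obtain ⟨g, hg⟩ := exists_ker_aeval_pair_eq_span hA hy0 hytr hc hd
  refine ⟨Fin 2, _, g, Fin.forall_fin_two.2
    ⟨⟨div_mem hyF' (F'.algebraMap_mem c), valuation_div_le_one_of_lt hc⟩,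
      div_mem (inv_mem hyF') (F'.algebraMap_mem d), valuation_div_le_one_of_lt hd⟩, hg, ?_⟩
  rwa [← Algebra.adjoin_range_eq_range_aeval]

end TranscendentalSteps

section ValueGroup

open NNReal

variable {E : Type*} [Field E] (w : Valuation E ℝ≥0)

lemma valuation_units_pos (u : Eˣ) : 0 < w u := zero_lt_iff.2 (w.ne_zero_iff.2 u.ne_zero)

/-- The additive form of a real-valued valuation: the homomorphism `z ↦ log (w z)` to the real
numbers, whose range is the value group. -/
def logValuation : Additive Eˣ →+ ℝ where
  toFun u := Real.log (w u.toMul)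
  map_zero' := by rw [toMul_zero, Units.val_one, map_one, NNReal.coe_one, Real.log_one]
  map_add' u u' := by
    rw [toMul_add, Units.val_mul, map_mul, NNReal.coe_mul, Real.log_mul
      (NNReal.coe_ne_zero.2 (valuation_units_pos w _).ne')
      (NNReal.coe_ne_zero.2 (valuation_units_pos w _).ne')]

lemma denseRange_of_dense_logValuation (hd : Dense ((logValuation w).range : Set ℝ)) :
    DenseRange w := by
  refine dense_of_exists_between fun a b hab ↦ ?_
  obtain ⟨a', haa', hab'⟩ := exists_between hab
  have ha' : 0 < a' := zero_le.trans_lt haa'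
  obtain ⟨_, ⟨u, rfl⟩, hau, hub⟩ :=
    hd.exists_between (Real.log_lt_log (NNReal.coe_pos.2 ha') hab')
  have hu : 0 < w u.toMul := valuation_units_pos w _
  exact ⟨w u.toMul, ⟨_, rfl⟩,
    haa'.trans ((Real.log_lt_log_iff (NNReal.coe_pos.2 ha') (NNReal.coe_pos.2 hu)).1 hau),
    (Real.log_lt_log_iff (NNReal.coe_pos.2 hu) (NNReal.coe_pos.2 (ha'.trans hab'))).1 hub⟩

lemma exists_zpow_of_logValuation_mem_closure {u z : Eˣ}
    (hz : logValuation w (.ofMul z) ∈ AddSubgroup.closure {logValuation w (.ofMul u)}) :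
    ∃ k : ℤ, w z = w u ^ k := by
  obtain ⟨k, hk⟩ := AddSubgroup.mem_closure_singleton.1 hz
  refine ⟨k, NNReal.coe_injective (Real.log_injOn_pos
    (NNReal.coe_pos.2 (valuation_units_pos w z))
    (NNReal.coe_pos.2 (zpow_pos (valuation_units_pos w u) k)) ?_)⟩
  rw [NNReal.coe_zpow, Real.log_zpow]
  exact hk.symm.trans (zsmul_eq_mul _ _)

lemma denseRange_or_exists_zpow (hw : ∃ c, c ≠ 0 ∧ w c < 1) :
    DenseRange w ∨ ∃ g, g ≠ 0 ∧ w g < 1 ∧ ∀ z, z ≠ 0 → ∃ k : ℤ, w z = w g ^ k := by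
  refine (logValuation w).range.dense_or_cyclic.imp (denseRange_of_dense_logValuation w) ?_
  rintro ⟨a, ha⟩
  obtain ⟨u, rfl⟩ : a ∈ (logValuation w).range := ha ▸ AddSubgroup.subset_closure rfl
  have hgen (z : E) (hz : z ≠ 0) : ∃ k : ℤ, w z = w u.toMul ^ k :=
    exists_zpow_of_logValuation_mem_closure (z := .mk0 z hz) w
      (ha ▸ AddMonoidHom.mem_range.2 ⟨_, rfl⟩)
  rcases lt_trichotomy (w u.toMul) 1 with h | h | h
  · exact ⟨u.toMul, u.toMul.ne_zero, h, hgen⟩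
  · obtain ⟨c, hc0, hc⟩ := hw
    obtain ⟨k, hk⟩ := hgen c hc0
    rw [h, one_zpow] at hk
    exact absurd hk hc.ne
  · refine ⟨(u.toMul : E)⁻¹, inv_ne_zero u.toMul.ne_zero, ?_, fun z hz ↦ ?_⟩
    · rw [map_inv₀]
      exact inv_lt_one_of_one_lt₀ h
    · obtain ⟨k, hk⟩ := hgen z hz
      exact ⟨-k, by rw [map_inv₀, inv_zpow', neg_neg, hk]⟩

lemma exists_valuation_sum_eq {ι : Type*} {s : Finset ι} (hs : s.Nonempty) {f : ι → E}
    (hf : ∀ i ∈ s, ∀ j ∈ s, i ≠ j → w (f i) = w (f j) → f i = 0) :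
    ∃ i ∈ s, w (∑ j ∈ s, f j) = w (f i) ∧ ∀ j ∈ s, w (f j) ≤ w (f i) := by
  classical
  obtain ⟨i, hi, hmax⟩ := s.exists_max_image (fun j ↦ w (f j)) hs
  refine ⟨i, hi, ?_, hmax⟩
  by_cases h0 : w (f i) = 0
  · have hzero (j) (hj : j ∈ s) : f j = 0 := w.zero_iff.1 (le_antisymm (h0 ▸ hmax j hj) zero_le)
    rw [Finset.sum_eq_zero hzero, map_zero, h0]
  · refine Valuation.map_sum_eq_of_lt w hi fun j hj ↦ ?_
    rw [Finset.mem_sdiff, Finset.mem_singleton] at hj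
    refine lt_of_le_of_ne (hmax j hj.1) fun heq ↦ h0 ?_
    rw [hf i hi j hj.1 (Ne.symm hj.2) heq.symm, map_zero]

end ValueGroup

section AlgebraicSteps

open Polynomial NNReal Filter

variable {M F : Type*} [Field M] [Field F] [Algebra F M] {v : Valuation M ℝ≥0}

lemma valuation_coeff_mul_pow_le {y : M} {p : F[X]}
    (hy : ∀ i ≠ 0, i ≤ p.natDegree → ∀ c : F, v y ^ i ≠ v (algebraMap F M c)) (j : ℕ) :
    v (algebraMap F M (p.coeff j) * y ^ j) ≤ v (aeval y p) := by
  have hne {i k : ℕ} (hik : i < k) (hk : k ≤ p.natDegree)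
      (h : v (algebraMap F M (p.coeff i) * y ^ i) = v (algebraMap F M (p.coeff k) * y ^ k)) :
      v (algebraMap F M (p.coeff k) * y ^ k) = 0 := by
    by_contra h0
    rw [map_mul, map_pow] at h0
    have hpow : v y ^ k = v y ^ (k - i) * v y ^ i := by rw [← pow_add, Nat.sub_add_cancel hik.le]
    rw [map_mul, map_mul, map_pow, map_pow, hpow, ← mul_assoc] at h
    have hyi : v y ^ i ≠ 0 := pow_ne_zero i (ne_zero_pow (by lia) (right_ne_zero_of_mul h0))
    refine hy (k - i) (by lia) (by lia) (p.coeff i / p.coeff k) ?_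
    rw [map_div₀, map_div₀, eq_div_iff (left_ne_zero_of_mul h0), mul_comm]
    exact (mul_right_cancel₀ hyi h).symm
  by_cases hj : j ≤ p.natDegree
  · obtain ⟨i, -, hi, hmax⟩ := exists_valuation_sum_eq v (s := Finset.range (p.natDegree + 1))
      (f := fun j ↦ algebraMap F M (p.coeff j) * y ^ j) Finset.nonempty_range_add_one
      fun i hi k hk hik h ↦ by
        rw [Finset.mem_range_succ_iff] at hi hk
        refine v.zero_iff.1 ?_
        rcases hik.lt_or_gt with hlt | hlt
        · exact h.trans (hne hlt hk h)
        · exact hne hlt hi h.symm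
    rw [aeval_eq_sum_range]
    simp only [Algebra.smul_def]
    exact (hmax j (Finset.mem_range_succ_iff.2 hj)).trans hi.ge
  · rw [coeff_eq_zero_of_natDegree_lt (not_le.1 hj), map_zero, zero_mul, map_zero]
    exact zero_le

section LowDegreeSplits

variable {n : ℕ} (hmin : ∀ p : F[X], p.natDegree < n → p.Splits)
include hmin

lemma exists_valuation_eq_of_pow_eq {t : ℝ≥0} {i : ℕ} (hi : i ≠ 0) (hin : i < n) {c : F}
    (h : t ^ i = v (algebraMap F M c)) : ∃ c' : F, t = v (algebraMap F M c') := by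
  have hs : (X ^ i - C c : F[X]).Splits := hmin _ (by rwa [natDegree_X_pow_sub_C])
  obtain ⟨r, hr⟩ := hs.exists_eval_eq_zero (by
    rw [degree_X_pow_sub_C (Nat.pos_of_ne_zero hi)]
    exact_mod_cast hi)
  rw [eval_sub, eval_pow, eval_X, eval_C, sub_eq_zero] at hr
  rw [← hr, map_pow, map_pow] at h
  exact ⟨r, pow_left_injective hi h⟩

lemma valuation_pow_ne_of_valuation_ne {y : M} (hy : ∀ c : F, v y ≠ v (algebraMap F M c)) :
    ∀ i ≠ 0, i < n → ∀ c : F, v y ^ i ≠ v (algebraMap F M c) := fun _ hi hin _ h ↦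
  let ⟨c', hc'⟩ := exists_valuation_eq_of_pow_eq hmin hi hin h
  hy c' hc'

variable {F' : IntermediateField F M} (hF' : Module.finrank F F' = n) (hn : n ≠ 0) {y : M}
include hF' hn

lemma exists_aeval_eq_of_natDegree_lt_splits (hy : y ∈ F') (hyF : ∀ c : F, algebraMap F M c ≠ y)
    {z : M} (hz : z ∈ F') : ∃ p : F[X], p.natDegree < n ∧ aeval y p = z := by
  have : FiniteDimensional F F' := FiniteDimensional.of_finrank_pos (by lia)
  have hintegral : IsIntegral F y :=
    (Algebra.IsIntegral.isIntegral (R := F) (⟨y, hy⟩ : F')).map F'.val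
  have hge : n ≤ (minpoly F y).natDegree := by
    by_contra! h
    obtain ⟨c, hc⟩ := minpoly.mem_range_of_degree_eq_one F y
      ((hmin _ h).degree_eq_one_of_irreducible (minpoly.irreducible hintegral))
    exact hyF c hc
  have hadjoin : IntermediateField.adjoin F {y} = F' :=
    IntermediateField.eq_of_le_of_finrank_le (IntermediateField.adjoin_simple_le_iff.2 hy)
      (by rwa [IntermediateField.adjoin.finrank hintegral, hF'])
  have hdeg : (minpoly F y).natDegree = n := by
    rw [← IntermediateField.adjoin.finrank hintegral, hadjoin, hF']
  rw [← hadjoin, ← IntermediateField.mem_toSubalgebra,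
    IntermediateField.adjoin_simple_toSubalgebra_of_isAlgebraic hintegral.isAlgebraic,
    Algebra.adjoin_singleton_eq_range_aeval] at hz
  obtain ⟨p, rfl⟩ := hz
  refine ⟨p %ₘ minpoly F y, ?_, aeval_modByMonic_eq_self_of_root (minpoly.aeval _ _)⟩
  rw [← hdeg]
  exact natDegree_modByMonic_lt _ (minpoly.monic hintegral) (minpoly.ne_one F y)

lemma exists_valuation_pow_finrank_eq (hy : y ∈ F') :
    ∃ c : F, v y ^ n = v (algebraMap F M c) := by
  by_contra! hyn
  have : FiniteDimensional F F' := FiniteDimensional.of_finrank_pos (by lia)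
  have hintegral : IsIntegral F (⟨y, hy⟩ : F') := Algebra.IsIntegral.isIntegral _
  have hdeg : (minpoly F (⟨y, hy⟩ : F')).natDegree ≤ n := hF' ▸ minpoly.natDegree_le _
  have hyv (c : F) : v y ≠ v (algebraMap F M c) := fun h ↦
    hyn (c ^ n) (by rw [h, map_pow, map_pow])
  have hle := valuation_coeff_mul_pow_le (v := v) (y := y) (p := minpoly F (⟨y, hy⟩ : F'))
    (fun i hi hile ↦ by
      rcases (hile.trans hdeg).lt_or_eq with hin | rfl
      · exact valuation_pow_ne_of_valuation_ne hmin hyv i hi hin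
      · exact hyn) (minpoly F (⟨y, hy⟩ : F')).natDegree
  have hroot : aeval y (minpoly F (⟨y, hy⟩ : F')) = 0 :=
    (aeval_algebraMap_apply M (⟨y, hy⟩ : F') _).trans (by rw [minpoly.aeval, map_zero])
  rw [coeff_natDegree, (minpoly.monic hintegral).leadingCoeff, map_one, one_mul, hroot, map_zero,
    map_pow] at hle
  refine hyv 0 ?_
  rw [map_zero, map_zero]
  exact eq_zero_of_pow_eq_zero (le_antisymm hle zero_le)

lemma denseRange_valuation_of_finrank (hd : DenseRange fun z : F' ↦ v (algebraMap F' M z)) :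
    DenseRange fun c : F ↦ v (algebraMap F M c) := by
  have hpow : Function.Surjective fun t : ℝ≥0 ↦ t ^ n :=
    fun t ↦ ⟨t ^ (n⁻¹ : ℝ), NNReal.rpow_inv_natCast_pow t hn⟩
  refine (hpow.denseRange.comp hd (continuous_pow n)).mono ?_
  rintro _ ⟨z, rfl⟩
  obtain ⟨c, hc⟩ := exists_valuation_pow_finrank_eq (v := v) hmin hF' hn z.2
  exact ⟨c, hc.symm⟩

end LowDegreeSplits

lemma valuation_le_one_of_mul_pow_le_one {g : M} (hg0 : g ≠ 0) (hg1 : v g < 1) {c : F} {j : ℕ}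
    (hg : ∀ i ≠ 0, i ≤ j → ∀ c : F, v g ^ i ≠ v (algebraMap F M c))
    (hc : ∃ k : ℤ, v (algebraMap F M c) = v g ^ k) (h : v (algebraMap F M c * g ^ j) ≤ 1) :
    v (algebraMap F M c) ≤ 1 := by
  obtain ⟨k, hk⟩ := hc
  have hvg : 0 < v g := zero_lt_iff.2 (v.ne_zero_iff.2 hg0)
  rw [map_mul, map_pow, hk, ← zpow_natCast, ← zpow_add₀ hvg.ne'] at h
  have hkj : 0 ≤ k + j := by
    by_contra! hneg
    exact absurd h (one_lt_zpow_of_neg₀ hvg hg1 hneg).not_ge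
  rw [hk]
  refine zpow_le_one₀ hvg hg1.le ?_
  by_contra! hneg
  obtain ⟨i, hi⟩ := Int.eq_ofNat_of_zero_le (a := -k) (by lia)
  refine hg i (by lia) (by lia) c⁻¹ ?_
  rw [map_inv₀, map_inv₀, hk, ← zpow_neg, hi, zpow_natCast]

variable {A : Type*} [CommRing A] [Algebra A M]

lemma eventually_aeval_mem {ι : Type*} {l : Filter ι} {B : ι → Subalgebra A M} {y : M} {p : F[X]}
    (h : ∀ j ≤ p.natDegree, ∀ᶠ i in l, algebraMap F M (p.coeff j) * y ^ j ∈ B i) :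
    ∀ᶠ i in l, aeval y p ∈ B i := by
  have hall := (eventually_all_finset (Finset.range (p.natDegree + 1))).2 fun j hj ↦
    h j (Finset.mem_range_succ_iff.1 hj)
  filter_upwards [hall] with i hi
  rw [aeval_eq_sum_range]
  simp only [Algebra.smul_def]
  exact sum_mem hi

variable [IsDomain A] [Algebra A F] [IsScalarTower A F M]
  (hA : (v.comap (algebraMap F M)).Integers A)
include hA

section Gap

variable {n : ℕ} {F' : IntermediateField F M} {y : M} (hyF' : y ∈ F')
  (hy : ∀ i ≠ 0, i < n → ∀ c : F, v y ^ i ≠ v (algebraMap F M c))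
  (hrep : ∀ s ∈ F', ∃ p : F[X], p.natDegree < n ∧ aeval y p = s)
include hyF' hy hrep

lemma isHypersurfaceStep_of_gap_of_denseRange
    (hd : DenseRange fun c : F ↦ v (algebraMap F M c)) :
    IsHypersurfaceStep v A (F' : Set M) := by
  have := neBot_valuesAbove hd y
  refine isHypersurfaceStep_of_eventually_adjoin hA (valuesAbove v F y)
    (fun c ↦ y / algebraMap F M c) ((eventually_lt_valuesAbove v F y).mono fun c hc ↦
      ⟨div_mem hyF' (F'.algebraMap_mem c), valuation_div_le_one_of_lt hc⟩) ?_
  intro s hs hvs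
  obtain ⟨p, hp, rfl⟩ := hrep s hs
  refine (eventually_aeval_mem fun j hj ↦ ?_).mono fun c hc ↦ le_unitFractions hc
  exact eventually_mul_pow_mem_adjoin hA (fun hj0 ↦ hy j hj0 (hj.trans_lt hp))
    ((valuation_coeff_mul_pow_le (fun i hi hip ↦ hy i hi (hip.trans_lt hp)) j).trans hvs)

lemma isHypersurfaceStep_of_gap_of_forall_zpow (hy0 : y ≠ 0) (hy1 : v y < 1)
    (hgen : ∀ c : F, c ≠ 0 → ∃ k : ℤ, v (algebraMap F M c) = v y ^ k) :
    IsHypersurfaceStep v A (F' : Set M) := by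
  refine isHypersurfaceStep_of_eventually_adjoin hA (⊤ : Filter Unit) (fun _ ↦ y)
    (.of_forall fun _ ↦ ⟨hyF', hy1.le⟩) ?_
  intro s hs hvs
  obtain ⟨p, hp, rfl⟩ := hrep s hs
  refine (eventually_aeval_mem fun j hj ↦ .of_forall fun _ ↦ ?_).mono fun _ h ↦ le_unitFractions h
  refine mul_mem (algebraMap_mem_of_valuation_le_one hA _ ?_)
    (pow_mem (Algebra.self_mem_adjoin_singleton A y) j)
  by_cases hpj : p.coeff j = 0
  · rw [hpj, map_zero, map_zero]
    exact zero_le_one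
  · exact valuation_le_one_of_mul_pow_le_one hy0 hy1
      (fun i hi hij ↦ hy i hi (hij.trans_lt (hj.trans_lt hp))) (hgen _ hpj)
      ((valuation_coeff_mul_pow_le (fun i hi hip ↦ hy i hi (hip.trans_lt hp)) j).trans hvs)

end Gap

lemma isHypersurfaceStep_of_finrank {n : ℕ} (hmin : ∀ p : F[X], p.natDegree < n → p.Splits)
    {F' : IntermediateField F M} (hF' : Module.finrank F F' = n) (hn : n ≠ 0)
    (hnt : ∃ c : F, c ≠ 0 ∧ v (algebraMap F M c) < 1) {y : M} (hyF' : y ∈ F')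
    (hy : ∀ c : F, v y ≠ v (algebraMap F M c)) : IsHypersurfaceStep v A (F' : Set M) := by
  have hF {z : M} (hz : ∀ c : F, v z ≠ v (algebraMap F M c)) (c : F) : algebraMap F M c ≠ z :=
    fun h ↦ hz c (by rw [h])
  obtain ⟨c₀, hc₀, hvc₀⟩ := hnt
  rcases denseRange_or_exists_zpow (v.comap (algebraMap F' M))
    ⟨algebraMap F F' c₀, (_root_.map_ne_zero _).2 hc₀, hvc₀⟩ with hd | ⟨g, hg0, hg1, hgen⟩
  · exact isHypersurfaceStep_of_gap_of_denseRange hA hyF'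
      (valuation_pow_ne_of_valuation_ne hmin hy)
      (fun _ ↦ exists_aeval_eq_of_natDegree_lt_splits hmin hF' hn hyF' (hF hy))
      (denseRange_valuation_of_finrank hmin hF' hn hd)
  · have hgv (c : F) : v (g : M) ≠ v (algebraMap F M c) := by
      intro hc
      have hy0 : (⟨y, hyF'⟩ : F') ≠ 0 := fun h ↦ hy 0 (by
        rw [map_zero, show y = 0 from congrArg Subtype.val h])
      obtain ⟨k, hk⟩ := hgen _ hy0
      refine hy (c ^ k) ?_
      rw [map_zpow₀, map_zpow₀, ← hc]
      exact hk
    exact isHypersurfaceStep_of_gap_of_forall_zpow hA g.2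
      (valuation_pow_ne_of_valuation_ne hmin hgv)
      (fun _ ↦ exists_aeval_eq_of_natDegree_lt_splits hmin hF' hn g.2 (hF hgv))
      (fun h ↦ hg0 (Subtype.ext h)) hg1
      fun c hc ↦ hgen (algebraMap F F' c) ((_root_.map_ne_zero _).2 hc)

end AlgebraicSteps

section ExistsStep

open Polynomial NNReal

variable {M F : Type*} [Field M] [Field F] [Algebra F M]

lemma splits_of_forall_aeval_eq_zero [IsAlgClosed M] {p : F[X]}
    (h : ∀ z : M, p ≠ 0 → aeval z p = 0 → ∃ c, algebraMap F M c = z) : p.Splits := by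
  by_cases hp : p = 0
  · rw [hp]
    exact .zero
  · refine Splits.of_splits_map (algebraMap F M) (IsAlgClosed.splits _) fun z hz ↦ h z hp ?_
    rwa [mem_roots_map hp, eval₂_eq_eval_map, eval_map_algebraMap] at hz

lemma isAlgClosed_of_forall_isIntegral [IsAlgClosed M]
    (h : ∀ z : M, IsIntegral F z → ∃ c, algebraMap F M c = z) : IsAlgClosed F :=
  ⟨fun _ ↦ splits_of_forall_aeval_eq_zero fun z hp hz ↦ h z (IsAlgebraic.isIntegral ⟨_, hp, hz⟩)⟩

lemma exists_splits_of_natDegree_lt_minpoly [IsAlgClosed M]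
    (h : ∃ x : M, IsIntegral F x ∧ ∀ c, algebraMap F M c ≠ x) :
    ∃ x : M, IsIntegral F x ∧ (∀ c, algebraMap F M c ≠ x) ∧
      ∀ p : F[X], p.natDegree < (minpoly F x).natDegree → p.Splits := by
  obtain ⟨x, ⟨hintegral, hx⟩, hmin⟩ := exists_minimalFor_of_wellFoundedLT
    (fun x : M ↦ IsIntegral F x ∧ ∀ c, algebraMap F M c ≠ x) (fun x ↦ (minpoly F x).natDegree) h
  refine ⟨x, hintegral, hx, fun p hp ↦ splits_of_forall_aeval_eq_zero (M := M) fun z hp0 hz ↦ ?_⟩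
  by_contra! hzF
  have hzp : (minpoly F z).natDegree < (minpoly F x).natDegree :=
    (natDegree_le_of_dvd (minpoly.dvd F z hz) hp0).trans_lt hp
  exact (hmin ⟨IsAlgebraic.isIntegral ⟨p, hp0, hz⟩, hzF⟩ hzp.le).not_gt hzp

variable {v : Valuation M ℝ≥0}

lemma denseRange_valuation_of_isAlgClosed [IsAlgClosed F]
    (hnt : ∃ c : F, c ≠ 0 ∧ v (algebraMap F M c) < 1) :
    DenseRange fun c : F ↦ v (algebraMap F M c) := by
  refine (denseRange_or_exists_zpow (v.comap (algebraMap F M)) hnt).resolve_right ?_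
  rintro ⟨g, hg0, hg1, hgen⟩
  obtain ⟨r, rfl⟩ := IsAlgClosed.exists_pow_nat_eq g two_pos
  obtain ⟨k, hk⟩ := hgen r (ne_zero_pow two_ne_zero hg0)
  rw [map_pow] at hk hg1
  have hr0 : 0 < v.comap (algebraMap F M) r :=
    zero_lt_iff.2 (Valuation.ne_zero_iff _ |>.2 (ne_zero_pow two_ne_zero hg0))
  have hr1 : v.comap (algebraMap F M) r ≠ 1 := fun h ↦ hg1.ne (by rw [h, one_pow])
  rw [← zpow_natCast, ← zpow_mul] at hk
  have := zpow_right_injective₀ hr0 hr1 ((zpow_one _).trans hk)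
  lia

variable {A : Type*} [CommRing A] [Algebra A M] [IsDomain A] [Algebra A F] [IsScalarTower A F M]
  (hA : (v.comap (algebraMap F M)).Integers A)
  (hnt : ∃ c : F, c ≠ 0 ∧ v (algebraMap F M c) < 1)
include hA hnt

lemma isHypersurfaceStep_adjoin_of_isIntegral {x : M} (hintegral : IsIntegral F x)
    (hx : ∀ c : F, algebraMap F M c ≠ x)
    (hmin : ∀ p : F[X], p.natDegree < (minpoly F x).natDegree → p.Splits) :
    IsHypersurfaceStep v A (IntermediateField.adjoin F {x} : Set M) := by
  have hxF' := IntermediateField.mem_adjoin_simple_self F x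
  have hF' := IntermediateField.adjoin.finrank hintegral
  have hdeg : (minpoly F x).natDegree ≠ 0 := (minpoly.natDegree_pos hintegral).ne'
  by_cases hval : ∀ a : F, ∃ c : F, v (x - algebraMap F M a) = v (algebraMap F M c)
  · refine isHypersurfaceStep_of_forall_valuation_sub_eq hA hxF' hx hval fun s hs ↦ ?_
    obtain ⟨p, hp, rfl⟩ := exists_aeval_eq_of_natDegree_lt_splits hmin hF' hdeg hxF' hx hs
    exact ⟨p, 1, hmin p hp, .one, by rw [map_one, div_one]⟩
  · push Not at hval
    obtain ⟨a, ha⟩ := hval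
    exact isHypersurfaceStep_of_finrank hA hmin hF' hdeg hnt
      (sub_mem hxF' (IntermediateField.algebraMap_mem _ a)) ha

lemma isHypersurfaceStep_adjoin_of_transcendental [IsAlgClosed F] {x : M}
    (hx : Transcendental F x) :
    IsHypersurfaceStep v A (IntermediateField.adjoin F {x} : Set M) := by
  have hxF' := IntermediateField.mem_adjoin_simple_self F x
  have hrep (s) (hs : s ∈ IntermediateField.adjoin F {x}) :
      ∃ p q : F[X], p.Splits ∧ q.Splits ∧ s = aeval x p / aeval x q :=
    let ⟨p, q, hpq⟩ := (IntermediateField.mem_adjoin_simple_iff F s).1 hs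
    ⟨p, q, IsAlgClosed.splits p, IsAlgClosed.splits q, hpq⟩
  by_cases hval : ∀ a : F, ∃ c : F, v (x - algebraMap F M a) = v (algebraMap F M c)
  · exact isHypersurfaceStep_of_forall_valuation_sub_eq hA hxF'
      (fun a ha ↦ hx (ha ▸ isAlgebraic_algebraMap a)) hval hrep
  · push Not at hval
    obtain ⟨a, ha⟩ := hval
    exact isHypersurfaceStep_of_transcendental hA hxF' hx
      (fun i hi ↦ valuation_pow_ne_of_valuation_ne (n := i + 1) (fun p _ ↦ IsAlgClosed.splits p)
        ha i hi i.lt_succ_self) (denseRange_valuation_of_isAlgClosed hnt) hrep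

lemma exists_isHypersurfaceStep [IsAlgClosed M] (hne : ∃ x : M, ∀ c : F, algebraMap F M c ≠ x) :
    ∃ F' : IntermediateField F M, (∃ x ∈ F', ∀ c : F, algebraMap F M c ≠ x) ∧
      IsHypersurfaceStep v A (F' : Set M) := by
  by_cases halg : ∃ x : M, IsIntegral F x ∧ ∀ c : F, algebraMap F M c ≠ x
  · obtain ⟨x, hintegral, hx, hmin⟩ := exists_splits_of_natDegree_lt_minpoly halg
    exact ⟨_, ⟨x, IntermediateField.mem_adjoin_simple_self F x, hx⟩,
      isHypersurfaceStep_adjoin_of_isIntegral hA hnt hintegral hx hmin⟩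
  · push Not at halg
    have := isAlgClosed_of_forall_isIntegral halg
    obtain ⟨x, hx⟩ := hne
    have htr : Transcendental F x := fun h ↦ (halg x h.isIntegral).elim hx
    exact ⟨_, ⟨x, IntermediateField.mem_adjoin_simple_self F x, hx⟩,
      isHypersurfaceStep_adjoin_of_transcendental hA hnt htr⟩

end ExistsStep

section Subfields

open NNReal

variable {R K M : Type*} [CommRing R] [Field K] [Field M] [Algebra R K] [Algebra R M] [Algebra K M]
  [IsScalarTower R K M] {v : Valuation M ℝ≥0}

/-- The elements of value at most one of the intermediate field `F` of `M / K`, as a subalgebra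
over a ring `R ⊆ K` of integral elements. -/
def integersIn (hR : ∀ r : R, v (algebraMap R M r) ≤ 1) (F : IntermediateField K M) :
    Subalgebra R M where
  carrier := {x | x ∈ F ∧ v x ≤ 1}
  mul_mem' ha hb := ⟨mul_mem ha.1 hb.1, (map_mul v _ _).trans_le (mul_le_one' ha.2 hb.2)⟩
  add_mem' ha hb := ⟨add_mem ha.1 hb.1, (v.map_add _ _).trans (max_le ha.2 hb.2)⟩
  algebraMap_mem' r := ⟨IsScalarTower.algebraMap_apply R K M r ▸ F.algebraMap_mem _, hR r⟩

variable {hR : ∀ r : R, v (algebraMap R M r) ≤ 1} {F F' : IntermediateField K M}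

lemma integersIn_mono (h : F ≤ F') : integersIn hR F ≤ integersIn hR F' :=
  fun _ hx ↦ ⟨h hx.1, hx.2⟩

instance : Algebra (integersIn hR F) F :=
  (Subring.inclusion (S := (integersIn hR F).toSubring) (T := F.toSubfield.toSubring)
    fun _ hx ↦ hx.1).toAlgebra

instance : IsScalarTower (integersIn hR F) F M := .of_algebraMap_eq fun _ ↦ rfl

variable (hR F) in
lemma integers_integersIn : (v.comap (algebraMap F M)).Integers (integersIn hR F) where
  hom_inj _ _ h := Subtype.ext (congrArg (algebraMap F M) h)
  map_le_one x := x.2.2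
  exists_of_le_one {x} hx := ⟨⟨x, x.2, hx⟩, rfl⟩

instance : ValuationRing (integersIn hR F) :=
  .of_integers _ (integers_integersIn hR F)

lemma isUnit_integersIn_iff {x : integersIn hR F} : IsUnit x ↔ v (x : M) = 1 :=
  (integers_integersIn hR F).isUnit_iff_valuation_eq_one

lemma flat_of_faithfulSMul (A B : Type*) [CommRing A] [IsDomain A] [ValuationRing A] [CommRing B]
    [IsDomain B] [Algebra A B] [FaithfulSMul A B] : Module.Flat A B := by
  rw [Module.Flat.flat_iff_torsion_eq_bot_of_isBezout, ← Submodule.isTorsionFree_iff_torsion_eq_bot]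
  infer_instance

lemma IsHypersurfaceStep.exhaustedByHypersurfaces [Algebra (integersIn hR F) (integersIn hR F')]
    [IsScalarTower (integersIn hR F) (integersIn hR F') M]
    (h : IsHypersurfaceStep v (integersIn hR F) (F' : Set M)) :
    ExhaustedByHypersurfaces (integersIn hR F) (integersIn hR F') := by
  intro S
  obtain ⟨σ, y, g, hy, hg, hS⟩ := h (S.map (Function.Embedding.subtype _)) fun s hs ↦ by
    obtain ⟨z, -, rfl⟩ := Finset.mem_map.1 hs
    exact z.2
  let y' (i : σ) : integersIn hR F' := ⟨y i, hy i⟩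
  have hy' (p : MvPolynomial σ (integersIn hR F)) :
      (MvPolynomial.aeval y' p : M) = MvPolynomial.aeval y p :=
    (MvPolynomial.aeval_algebraMap_apply M y' p).symm
  refine ⟨σ, y', g, ?_, fun s hs ↦ ?_⟩
  · rw [← hg]
    ext p
    rw [RingHom.mem_ker, RingHom.mem_ker, ← hy', ZeroMemClass.coe_eq_zero]
  · obtain ⟨_, ⟨p, rfl⟩, _, ⟨q, rfl⟩, hq, hpq⟩ := hS s (Finset.mem_map_of_mem _ hs)
    refine ⟨p, q, isUnit_integersIn_iff.2 ((congrArg v (hy' q)).trans hq), Subtype.ext ?_⟩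
    exact (congrArg _ (hy' q)).trans (hpq.trans (hy' p).symm)

theorem IsHypersurfaceStep.conormalPure_inclusion (hinj : Function.Injective (algebraMap R M))
    (hFF' : F ≤ F') (h : IsHypersurfaceStep v (integersIn hR F) (F' : Set M)) :
    ConormalPure (Subalgebra.inclusion (integersIn_mono hFF' :
      integersIn hR F ≤ integersIn hR F')) := by
  have := hinj.isDomain
  let _ := (Subalgebra.inclusion (integersIn_mono hFF' :
    integersIn hR F ≤ integersIn hR F')).toAlgebra
  have : IsScalarTower R (integersIn hR F) (integersIn hR F') := .of_algebraMap_eq fun _ ↦ rfl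
  have : IsScalarTower (integersIn hR F) (integersIn hR F') M := .of_algebraMap_eq fun _ ↦ rfl
  have : FaithfulSMul (integersIn hR F) (integersIn hR F') :=
    (faithfulSMul_iff_algebraMap_injective _ _).2 (Subalgebra.inclusion_injective _)
  have : FaithfulSMul R (integersIn hR F') := (faithfulSMul_iff_algebraMap_injective _ _).2
    (.of_comp (f := Subtype.val) hinj)
  have : IsLocalHom (algebraMap (integersIn hR F) (integersIn hR F')) :=
    ⟨fun a ha ↦ isUnit_integersIn_iff.2 (isUnit_integersIn_iff (x := algebraMap _ _ a).1 ha)⟩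
  have := flat_of_faithfulSMul (integersIn hR F) (integersIn hR F')
  have := Module.FaithfullyFlat.of_flat_of_isLocalHom (A := integersIn hR F)
    (B := integersIn hR F')
  exact h.exhaustedByHypersurfaces.conormalPure (R := R) fun B ↦ flat_of_faithfulSMul _ B

lemma exists_mem_forall_mem_of_mem_sSup {c : Set (IntermediateField K M)} (hne : c.Nonempty)
    (hc : DirectedOn (· ≤ ·) c) (S : Finset M) (hS : ∀ s ∈ S, s ∈ sSup c) :
    ∃ F ∈ c, ∀ s ∈ S, s ∈ F := by
  have := hne.to_subtype
  have hsub : (S : Set M) ⊆ ⋃ F : c, (F : Set M) := by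
    rwa [← IntermediateField.coe_iSup_of_directed hc.directed_val, ← sSup_eq_iSup']
  obtain ⟨⟨F, hF⟩, hSF⟩ := hc.directed_val.exists_mem_subset_of_finset_subset_biUnion hsub
  exact ⟨F, hF, hSF⟩

lemma conormalPure_inclusion_sSup {c : Set (IntermediateField K M)} (hne : c.Nonempty)
    (hc : DirectedOn (· ≤ ·) c) (hF : F ≤ sSup c)
    (h : ∀ F' ∈ c, ∃ hF' : F ≤ F', ConormalPure (Subalgebra.inclusion
      (integersIn_mono hF' : integersIn hR F ≤ integersIn hR F'))) :
    ConormalPure (Subalgebra.inclusion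
      (integersIn_mono hF : integersIn hR F ≤ integersIn hR (sSup c))) := by
  refine .of_forall_finset _ fun S ↦ ?_
  obtain ⟨F', hF'c, hSF'⟩ := exists_mem_forall_mem_of_mem_sSup hne hc
    (S.map (Function.Embedding.subtype _)) fun s hs ↦ by
      obtain ⟨z, -, rfl⟩ := Finset.mem_map.1 hs
      exact z.2.1
  obtain ⟨hF', hpure⟩ := h F' hF'c
  refine ⟨integersIn hR F', _, _, Subalgebra.inclusion (integersIn_mono (le_sSup hF'c)), _, rfl,
    Subalgebra.inclusion_injective _, fun s hs ↦ ?_, hpure⟩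
  exact ⟨⟨s, hSF' s (Finset.mem_map_of_mem _ hs), s.2.2⟩, rfl⟩

lemma exists_isHypersurfaceStep_integersIn [IsAlgClosed M] (hF : F ≠ ⊤)
    (hnt : ∃ k : K, k ≠ 0 ∧ v (algebraMap K M k) < 1) :
    ∃ F' > F, IsHypersurfaceStep v (integersIn hR F) (F' : Set M) := by
  obtain ⟨k, hk, hvk⟩ := hnt
  obtain ⟨x, -, hx⟩ := SetLike.exists_of_lt hF.lt_top
  obtain ⟨F', ⟨z, hz, hzF⟩, hstep⟩ := exists_isHypersurfaceStep (integers_integersIn hR F)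
    ⟨algebraMap K F k, (_root_.map_ne_zero _).2 hk, hvk⟩ ⟨x, fun c hc ↦ hx (hc ▸ c.2)⟩
  refine ⟨F'.restrictScalars K, SetLike.lt_iff_le_and_exists.2
    ⟨fun y hy ↦ F'.algebraMap_mem ⟨y, hy⟩, z, hz, fun h ↦ hzF ⟨z, h⟩ rfl⟩, hstep⟩

theorem conormalPure_inclusion_top [IsAlgClosed M] (hinj : Function.Injective (algebraMap R M))
    (hnt : ∃ k : K, k ≠ 0 ∧ v (algebraMap K M k) < 1) (F : IntermediateField K M) :
    ConormalPure (Subalgebra.inclusion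
      (integersIn_mono le_top : integersIn hR F ≤ integersIn hR ⊤)) := by
  obtain ⟨F', -, ⟨hFF', hpure⟩, hmax⟩ := zorn_le_nonempty₀ {F' | ∃ h : F ≤ F', ConormalPure
      (Subalgebra.inclusion (integersIn_mono h : integersIn hR F ≤ integersIn hR F'))}
    (fun c hcZ hc F₁ hF₁ ↦
      have hF := (hcZ hF₁).1.trans (le_sSup hF₁)
      ⟨sSup c, ⟨hF, conormalPure_inclusion_sSup ⟨F₁, hF₁⟩ hc.directedOn hF hcZ⟩,
        fun _ ↦ le_sSup⟩)
    F ⟨le_rfl, .id⟩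
  obtain rfl : F' = ⊤ := by
    by_contra hne
    obtain ⟨E, hE, hstep⟩ := exists_isHypersurfaceStep_integersIn (hR := hR) hne hnt
    have hE' := hpure.comp (hstep.conormalPure_inclusion hinj hE.le)
    exact hE.not_ge (hmax ⟨hFF'.trans hE.le, hE'⟩ hE.le)
  exact hpure

end Subfields

section Integers

open NNReal

lemma ConormalTorsionFree.self (R : Type*) [CommRing R] [IsDomain R] : ConormalTorsionFree R R :=
  .of_isTorsionFree_h1Cotangent

variable {R O K L M : Type*} [CommRing R] [CommRing O] [Field K] [Field L] [Field M]
  [Algebra R K] [Algebra R M] [Algebra O L] [Algebra O M] [Algebra K L] [Algebra K M]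
  [Algebra L M] [IsScalarTower R K M] [IsScalarTower O L M] [IsScalarTower K L M]
  {v : Valuation M ℝ≥0} (hR : ∀ r : R, v (algebraMap R M r) ≤ 1)

lemma mem_integersIn_fieldRange_iff (hO : (v.comap (algebraMap L M)).Integers O) {x : M} :
    x ∈ integersIn hR (IsScalarTower.toAlgHom K L M).fieldRange ↔ ∃ a, algebraMap O M a = x := by
  constructor
  · rintro ⟨⟨l, rfl⟩, hl⟩
    obtain ⟨a, rfl⟩ := hO.exists_of_le_one hl
    exact ⟨a, IsScalarTower.algebraMap_apply O L M a⟩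
  · rintro ⟨a, rfl⟩
    rw [IsScalarTower.algebraMap_apply O L M]
    exact ⟨⟨_, rfl⟩, hO.map_le_one a⟩

variable [Algebra R O] [IsScalarTower R O M]

/-- The ring of integers `O` of `L` is that of the image of `L` in `M`. -/
def integersEquivFieldRange (hO : (v.comap (algebraMap L M)).Integers O) :
    O ≃ₐ[R] integersIn hR (IsScalarTower.toAlgHom K L M).fieldRange :=
  .ofBijective ((IsScalarTower.toAlgHom R O M).codRestrict _ fun a ↦
      (mem_integersIn_fieldRange_iff hR hO).2 ⟨a, rfl⟩)
    ⟨(AlgHom.injective_codRestrict ..).2 <| by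
        rw [IsScalarTower.coe_toAlgHom', IsScalarTower.algebraMap_eq O L M]
        exact (algebraMap L M).injective.comp hO.hom_inj,
      fun x ↦ let ⟨a, ha⟩ := (mem_integersIn_fieldRange_iff hR hO).1 x.2; ⟨a, Subtype.ext ha⟩⟩

theorem conormalTorsionFree_of_integers [IsAlgClosed M]
    (hK : (v.comap (algebraMap K M)).Integers R) (hL : (v.comap (algebraMap L M)).Integers O)
    (hnt : ∃ k : K, k ≠ 0 ∧ v (algebraMap K M k) < 1) : ConormalTorsionFree R O := by
  have := hK.hom_inj.isDomain
  have hR (r : R) : v (algebraMap R M r) ≤ 1 :=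
    IsScalarTower.algebraMap_apply R K M r ▸ hK.map_le_one r
  have hinj : Function.Injective (algebraMap R M) := by
    rw [IsScalarTower.algebraMap_eq R K M]
    exact (algebraMap K M).injective.comp hK.hom_inj
  let eR := integersEquivFieldRange (R := R) (K := K) hR hK
  let eO := integersEquivFieldRange (R := R) (K := K) hR hL
  have hbot := ConormalTorsionFree.of_conormalInjective (.of_algEquiv eR.symm) (.self R)
  have htop := (conormalPure_inclusion_top (hR := hR) hinj hnt _).torsionFree hbot
  have hOM := (ConormalInjective.of_algEquiv eO).comp
    (conormalPure_inclusion_top (hR := hR) hinj hnt _).injective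
  exact .of_conormalInjective hOM htop

end Integers

section AlgebraicallyClosedExtension

open NNReal

universe u

/-- The map `r ↦ exp (-r)`, sending `∞` to `0`, which turns additive into multiplicative
real-valued valuations. -/
def expNeg : WithTop ℝ → ℝ≥0
  | ⊤ => 0
  | (r : ℝ) => ⟨Real.exp (-r), (Real.exp_pos _).le⟩

lemma expNeg_zero : expNeg 0 = 1 :=
  NNReal.eq ((congrArg Real.exp neg_zero).trans Real.exp_zero)

lemma expNeg_add : ∀ s t, expNeg (s + t) = expNeg s * expNeg t
  | ⊤, _ => (congrArg expNeg (top_add _)).trans (zero_mul _).symm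
  | (_ : ℝ), ⊤ => (congrArg expNeg (add_top _)).trans (mul_zero _).symm
  | (s : ℝ), (t : ℝ) => NNReal.eq ((congrArg Real.exp (neg_add s t)).trans (Real.exp_add _ _))

lemma strictAnti_expNeg : StrictAnti expNeg
  | ⊤, _, h => absurd h not_top_lt
  | (s : ℝ), ⊤, _ => Real.exp_pos (-s)
  | (_ : ℝ), (_ : ℝ), h => Real.exp_lt_exp.2 (neg_lt_neg (WithTop.coe_lt_coe.1 h))

/-- The multiplicative valuation `exp (-v)` associated with a real-valued additive valuation. -/
def expNegValuation {L : Type*} [Field L] (v : AddValuation L (WithTop ℝ)) : Valuation L ℝ≥0 where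
  toFun x := expNeg (v x)
  map_zero' := congrArg expNeg v.map_zero
  map_one' := (congrArg expNeg v.map_one).trans expNeg_zero
  map_mul' x y := (congrArg expNeg (v.map_mul x y)).trans (expNeg_add _ _)
  map_add_le_max' x y := (strictAnti_expNeg.antitone (v.map_add x y)).trans_eq
    strictAnti_expNeg.antitone.map_min

lemma expNegValuation_le_one_iff {L : Type*} [Field L] {v : AddValuation L (WithTop ℝ)} {x : L} :
    expNegValuation v x ≤ 1 ↔ 0 ≤ v x := by
  rw [← expNeg_zero]
  exact strictAnti_expNeg.le_iff_ge

/-- The absolute value underlying a valuation with values in `ℝ≥0`. -/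
def absoluteValueOfValuation {L : Type*} [Field L] (v : Valuation L ℝ≥0) : AbsoluteValue L ℝ where
  toFun x := v x
  map_mul' x y := congrArg NNReal.toReal (map_mul v x y)
  nonneg' x := (v x).coe_nonneg
  eq_zero' _ := NNReal.coe_eq_zero.trans v.zero_iff
  add_le' x y := (v.map_add x y).trans (max_le_add_of_nonneg zero_le zero_le)

lemma exists_isAlgClosed_comap_eq_normedFieldValuation (L : Type u) [NontriviallyNormedField L]
    [IsUltrametricDist L] :
    ∃ (M : Type u) (_ : Field M) (_ : IsAlgClosed M) (_ : Algebra L M) (v : Valuation M ℝ≥0),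
      v.comap (algebraMap L M) = NormedField.valuation := by
  let E := UniformSpace.Completion L
  have hLE (x : L) : ‖algebraMap L E x‖ = ‖x‖ := UniformSpace.Completion.norm_coe x
  let _ : NontriviallyNormedField E :=
    { non_trivial := (NormedField.exists_one_lt_norm L).imp' _ fun x hx ↦ hx.trans_eq (hLE x).symm }
  have : IsUltrametricDist E := .of_normedAlgebra L
  let _ := spectralNorm.normedField E (AlgebraicClosure E)
  have : IsUltrametricDist (AlgebraicClosure E) :=
    IsUltrametricDist.isUltrametricDist_of_isNonarchimedean_norm isNonarchimedean_spectralNorm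
  exact ⟨AlgebraicClosure E, inferInstance, inferInstance, inferInstance, NormedField.valuation,
    Valuation.ext fun x ↦ NNReal.eq ((spectralNorm_extends (algebraMap L E x)).trans (hLE x))⟩

theorem exists_isAlgClosed_comap_eq {L : Type u} [Field L] (w : Valuation L ℝ≥0)
    (hw : ∃ x, x ≠ 0 ∧ w x < 1) :
    ∃ (M : Type u) (_ : Field M) (_ : IsAlgClosed M) (_ : Algebra L M) (v : Valuation M ℝ≥0),
      v.comap (algebraMap L M) = w := by
  obtain ⟨x, hx, hwx⟩ := hw
  let _ := (absoluteValueOfValuation w).toNormedField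
  let _ : NontriviallyNormedField L := .ofNormNeOne ⟨x, hx, (NNReal.coe_lt_coe.2 hwx).ne⟩
  have : IsUltrametricDist L :=
    IsUltrametricDist.isUltrametricDist_of_isNonarchimedean_norm w.map_add
  exact exists_isAlgClosed_comap_eq_normedFieldValuation L

end AlgebraicallyClosedExtension

section Localization

open Algebra (FormallyEtale H1Cotangent)
open scoped nonZeroDivisors

lemma subsingleton_of_exact {A B C : Type*} [AddCommGroup A] [AddCommGroup B] [AddCommGroup C]
    {f : A →+ B} {g : B →+ C} (h : Function.Exact f g) [Subsingleton A] [Subsingleton C] :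
    Subsingleton B :=
  subsingleton_of_forall_eq 0 fun b ↦ by
    obtain ⟨a, rfl⟩ := (h b).1 (Subsingleton.elim _ _)
    rw [Subsingleton.elim a 0, map_zero]

lemma subsingleton_h1Cotangent_iff_of_formallyEtale (R K L : Type*) [CommRing R] [CommRing K]
    [CommRing L] [Algebra R K] [Algebra R L] [Algebra K L] [IsScalarTower R K L]
    [FormallyEtale R K] [Module.Flat K L] :
    Subsingleton (H1Cotangent R L) ↔ Subsingleton (H1Cotangent K L) := by
  constructor
  · intro _
    exact subsingleton_of_exact (f := (H1Cotangent.map R K L L).toAddMonoidHom)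
      (g := (H1Cotangent.δ R K L).toAddMonoidHom) (H1Cotangent.exact_map_δ R K L)
  · intro _
    exact subsingleton_of_exact
      (f := ((H1Cotangent.map R R K L).liftBaseChange L).toAddMonoidHom)
      (g := (H1Cotangent.map R K L L).toAddMonoidHom)
      (H1Cotangent.exact_liftBaseChange_map_of_flat R K L)

variable {R O K L : Type*} [CommRing R] [IsDomain R] [CommRing O] [Algebra R O]

lemma subsingleton_h1Cotangent_iff_of_isTorsionFree [CommRing L] [Algebra R L] [Algebra O L]
    [IsScalarTower R O L] [IsLocalization (Algebra.algebraMapSubmonoid O R⁰) L]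
    [Module.IsTorsionFree R (H1Cotangent R O)] :
    Subsingleton (H1Cotangent R O) ↔ Subsingleton (H1Cotangent R L) := by
  let S := Algebra.algebraMapSubmonoid O R⁰
  have : IsLocalizedModule S (H1Cotangent.map R R O L) := inferInstance
  refine ⟨fun _ ↦ IsLocalizedModule.subsingleton_of_subsingleton S (H1Cotangent.map R R O L),
    fun hL ↦ subsingleton_of_forall_eq 0 fun t ↦ ?_⟩
  obtain ⟨_, ⟨r, hr, rfl⟩, ht⟩ :=
    (IsLocalizedModule.subsingleton_iff S (H1Cotangent.map R R O L)).1 hL t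
  rw [algebraMap_smul] at ht
  exact (smul_eq_zero_iff_right (nonZeroDivisors.ne_zero hr)).1 ht

theorem subsingleton_h1Cotangent_iff_of_isFractionRing [Field K] [CommRing L] [Algebra R K]
    [Algebra R L] [Algebra K L] [Algebra O L] [IsScalarTower R K L] [IsScalarTower R O L]
    [IsFractionRing R K] [IsLocalization (Algebra.algebraMapSubmonoid O R⁰) L]
    [Module.IsTorsionFree R (H1Cotangent R O)] :
    Subsingleton (H1Cotangent R O) ↔ Subsingleton (H1Cotangent K L) :=
  have : FormallyEtale R K := .of_isLocalization (Rₘ := K) R⁰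
  subsingleton_h1Cotangent_iff_of_isTorsionFree.trans
    (subsingleton_h1Cotangent_iff_of_formallyEtale R K L)

end Localization

section RingsOfIntegers

open Algebra (H1Cotangent)
open scoped NNReal nonZeroDivisors

lemma exists_pow_mul_le_one {L : Type*} [Field L] {w : Valuation L ℝ≥0} {k : L} (hk : w k < 1)
    (x : L) : ∃ n : ℕ, w (k ^ n * x) ≤ 1 := by
  obtain rfl | hx := eq_or_ne x 0
  · exact ⟨0, by simp⟩
  have hwx : 0 < w x := zero_lt_iff.2 ((map_ne_zero w).2 hx)
  obtain ⟨n, hn⟩ := exists_pow_lt_of_lt_one (inv_pos.2 hwx) hk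
  exact ⟨n, by simpa only [map_mul, map_pow] using ((NNReal.lt_inv_iff_mul_lt hwx.ne').1 hn).le⟩

section Extension

variable {R O K L : Type*} [CommRing R] [CommRing O] [Field K] [Field L] [Algebra R O]
  [Algebra R K] [Algebra R L] [Algebra O L] [Algebra K L] [IsScalarTower R K L]
  [IsScalarTower R O L] {w : Valuation L ℝ≥0}

lemma isLocalization_algebraMapSubmonoid_of_integers (hK : (w.comap (algebraMap K L)).Integers R)
    (hL : w.Integers O) (hnt : (w.comap (algebraMap K L)).IsNontrivial) :
    IsLocalization (Algebra.algebraMapSubmonoid O R⁰) L := by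
  have hRL (r : R) : algebraMap O L (algebraMap R O r) = algebraMap K L (algebraMap R K r) := by
    rw [← IsScalarTower.algebraMap_apply, ← IsScalarTower.algebraMap_apply]
  obtain ⟨k, hk, hwk⟩ := (Valuation.isNontrivial_iff_exists_lt_one _).1 hnt
  obtain ⟨r, rfl⟩ := hK.exists_of_le_one hwk.le
  have := hK.hom_inj.isDomain
  refine ⟨?_, fun x ↦ ?_, fun h ↦ ⟨1, congrArg _ (hL.hom_inj h)⟩⟩
  · rintro ⟨_, s, hs, rfl⟩
    refine IsUnit.mk0 _ ((hRL s).trans_ne ?_)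
    simpa [map_eq_zero_iff _ hK.hom_inj] using nonZeroDivisors.ne_zero hs
  · obtain ⟨n, hn⟩ := exists_pow_mul_le_one (w := w) (k := algebraMap K L _) hwk x
    obtain ⟨a, ha⟩ := hL.exists_of_le_one hn
    refine ⟨⟨a, algebraMap R O (r ^ n), _,
      pow_mem (mem_nonZeroDivisors_of_ne_zero fun h ↦ hk (by rw [h, map_zero])) n, rfl⟩, ?_⟩
    rw [ha, hRL, map_pow, map_pow, mul_comm]

theorem subsingleton_h1Cotangent_integers_iff (hK : (w.comap (algebraMap K L)).Integers R)
    (hL : w.Integers O) (hnt : (w.comap (algebraMap K L)).IsNontrivial) :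
    Subsingleton (H1Cotangent R O) ↔ Subsingleton (H1Cotangent K L) := by
  have hk := (Valuation.isNontrivial_iff_exists_lt_one _).1 hnt
  obtain ⟨M, _, _, _, v, rfl⟩ := exists_isAlgClosed_comap_eq w <|
    hk.imp' (algebraMap K L) fun k hk ↦ ⟨(map_ne_zero _).2 hk.1, hk.2⟩
  let _ := Algebra.compHom M (algebraMap K L)
  let _ := Algebra.compHom M (algebraMap R L)
  let _ := Algebra.compHom M (algebraMap O L)
  have : IsScalarTower K L M := .of_algebraMap_eq fun _ ↦ rfl
  have : IsScalarTower O L M := .of_algebraMap_eq fun _ ↦ rfl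
  have : IsScalarTower R L M := .of_algebraMap_eq fun _ ↦ rfl
  have : IsScalarTower R O M := .to₁₂₄ R O L M
  have : IsScalarTower R K M := .to₁₂₄ R K L M
  have := hK.hom_inj.isDomain
  have := hK.isFractionRing
  have := isLocalization_algebraMapSubmonoid_of_integers hK hL hnt
  have := (conormalTorsionFree_of_integers (v := v) hK hL hk).isTorsionFree_h1Cotangent
  exact subsingleton_h1Cotangent_iff_of_isFractionRing

end Extension

lemma integers_expNegValuation {L : Type*} [Field L] (v : AddValuation L (WithTop ℝ)) :
    (expNegValuation v).Integers v.unitBall where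
  hom_inj := Subtype.val_injective
  map_le_one x := expNegValuation_le_one_iff.2 x.2
  exists_of_le_one {x} hx := ⟨⟨x, expNegValuation_le_one_iff.1 hx⟩, rfl⟩

lemma isNontrivial_expNegValuation {K : Type*} [Field K] {v : AddValuation K (WithTop ℝ)}
    (hv : v.IsNontrivial) : (expNegValuation v).IsNontrivial := by
  obtain ⟨x, hx, hvx⟩ := hv
  refine ⟨x, (map_ne_zero _).2 hx, ?_⟩
  rw [← expNeg_zero]
  exact strictAnti_expNeg.injective.ne hvx

end RingsOfIntegers

section SeparableImpliesVanishing

open Algebra (H1Cotangent FormallySmooth)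
open MvPolynomial

lemma subsingleton_h1Cotangent_of_forall_finset {R B : Type*} [CommRing R] [CommRing B]
    [Algebra R B] (H : ∀ S : Finset B, ∃ D : Subalgebra R B, (S : Set B) ⊆ D ∧
      Subsingleton (H1Cotangent R D)) : Subsingleton (H1Cotangent R B) := by
  rw [subsingleton_h1Cotangent_iff]
  intro f hf hdf
  obtain ⟨D, hD, hD₁⟩ := H f.vars
  have hι : Function.Injective D.val := Subtype.val_injective
  obtain ⟨g, rfl⟩ := exists_rename_eq_of_vars_subset_range f D.val hι fun x hx ↦ ⟨⟨x, hD hx⟩, rfl⟩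
  refine rename_mem_relationIdeal_sq D.val <| subsingleton_h1Cotangent_iff.1 hD₁ g
    ((rename_mem_relationIdeal_iff hι).1 hf) fun i ↦ hι ?_
  rw [map_zero, ← aeval_id_rename_algHom, ← pderiv_rename hι]
  exact hdf (D.val i)

theorem subsingleton_h1Cotangent_of_isSeparableFieldExtension {K L : Type*} [Field K] [Field L]
    [Algebra K L] (h : IsSeparableFieldExtension K L) : Subsingleton (H1Cotangent K L) := by
  refine subsingleton_h1Cotangent_of_forall_finset fun S ↦
    ⟨(IntermediateField.adjoin K (S : Set L)).toSubalgebra, IntermediateField.subset_adjoin K _, ?_⟩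
  obtain ⟨T, hT, hsep⟩ := h S
  have : Algebra.IsSeparable (IntermediateField.adjoin K
      (Set.range ((↑) : T → IntermediateField.adjoin K (S : Set L))))
      (IntermediateField.adjoin K (S : Set L)) := by
    rwa [Subtype.range_coe]
  have : FormallySmooth K (IntermediateField.adjoin K (S : Set L)) :=
    .of_algebraicIndependent_of_isSeparable hT
  exact FormallySmooth.subsingleton_h1Cotangent

end SeparableImpliesVanishing

section VanishingImpliesSeparable

open Algebra (H1Cotangent FormallyUnramified)
open IntermediateField Polynomial TensorProduct
open scoped KaehlerDifferential

section PthPowers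

variable {p : ℕ} [Fact p.Prime]

lemma finrank_adjoin_simple_of_pow_mem {F K : Type*} [Field F] [Field K] [Algebra F K]
    [CharP K p] {x : K} (hx : x ∉ (algebraMap F K).range)
    (hxp : x ^ p ∈ (algebraMap F K).range) : Module.finrank F F⟮x⟯ = p := by
  have hp : p.Prime := Fact.out
  obtain ⟨c, hc⟩ := hxp
  have hmonic : (X ^ p - C c).Monic := monic_X_pow_sub_C c hp.ne_zero
  have hroot : aeval x (X ^ p - C c) = 0 := by simp [hc]
  have hirr : Irreducible (X ^ p - C c) := by
    refine X_pow_sub_C_irreducible_of_prime hp fun b hb ↦ hx ⟨b, frobenius_inj K p ?_⟩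
    rw [frobenius_def, frobenius_def, ← map_pow, hb, hc]
  rw [adjoin.finrank ⟨_, hmonic, hroot⟩, ← minpoly.eq_of_irreducible_of_monic hirr hroot hmonic,
    natDegree_X_pow_sub_C]

variable {K : Type*} [Field K] [CharP K p]

lemma adjoin_simple_eq_top_of_maximal {F : Subfield K} {a : K}
    (hF : Maximal (fun F : Subfield K ↦ (∀ b, b ^ p ∈ F) ∧ a ∉ F) F) : F⟮a⟯ = ⊤ := by
  have hp : p.Prime := Fact.out
  obtain ⟨⟨hpow, ha⟩, hmax⟩ := hF
  have hfinrank {x : K} (hx : x ∉ F) : Module.finrank F F⟮x⟯ = p :=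
    finrank_adjoin_simple_of_pow_mem (fun ⟨y, hy⟩ ↦ hx (hy ▸ y.2)) ⟨⟨_, hpow x⟩, rfl⟩
  refine eq_top_iff.2 fun x _ ↦ ?_
  by_cases hx : x ∈ F
  · exact F⟮a⟯.algebraMap_mem ⟨x, hx⟩
  have hle : F ≤ F⟮x⟯.toSubfield := fun y hy ↦ F⟮x⟯.algebraMap_mem ⟨y, hy⟩
  have hax : a ∈ F⟮x⟯ := by
    by_contra hax
    exact hx (hmax ⟨fun b ↦ hle (hpow b), hax⟩ hle (mem_adjoin_simple_self F x))
  have : FiniteDimensional F F⟮x⟯ := .of_finrank_pos (by rw [hfinrank hx]; exact hp.pos)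
  rw [eq_of_le_of_finrank_eq (adjoin_simple_le_iff.2 hax) (by rw [hfinrank hx, hfinrank ha])]
  exact mem_adjoin_simple_self F x

variable (p) in
lemma exists_maximal_subfield_notMem {a : K} (ha : ∀ b : K, b ^ p ≠ a) :
    ∃ F : Subfield K, Maximal (fun F : Subfield K ↦ (∀ b, b ^ p ∈ F) ∧ a ∉ F) F := by
  refine (zorn_le_nonempty₀ {F : Subfield K | (∀ b, b ^ p ∈ F) ∧ a ∉ F} ?_
    (frobenius K p).fieldRange ⟨fun b ↦ ⟨b, rfl⟩, fun ⟨b, hb⟩ ↦ ha b hb⟩).imp fun _ ↦ And.right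
  intro c hc hchain F hFc
  refine ⟨sSup c, ⟨fun b ↦ le_sSup hFc ((hc hFc).1 b), fun hmem ↦ ?_⟩, fun _ ↦ le_sSup⟩
  obtain ⟨E, hE, haE⟩ := (Subfield.mem_sSup_of_directedOn ⟨F, hFc⟩ hchain.directedOn).1 hmem
  exact (hc hE).2 haE

lemma formallyUnramified_of_adjoin_eq_top {R A : Type*} [CommRing R] [CommRing A] [Algebra R A]
    {s : Set A} (hs : Algebra.adjoin R s = ⊤) (hD : ∀ a ∈ s, KaehlerDifferential.D R A a = 0) :
    FormallyUnramified R A := by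
  have hzero (x : A) : KaehlerDifferential.D R A x = 0 :=
    Derivation.eqOn_adjoin (D2 := 0) (fun a ha ↦ hD a ha) (hs ▸ Algebra.mem_top)
  refine ⟨Submodule.subsingleton_iff A |>.1 (subsingleton_of_bot_eq_top ?_)⟩
  rw [← KaehlerDifferential.span_range_derivation R A, eq_comm, Submodule.span_eq_bot]
  rintro _ ⟨x, rfl⟩
  exact hzero x

/-- If `a` is not a `p`-th power, let `F ⊇ Kᵖ` be maximal with `a ∉ F`. Then `K = F(a)` is
unramified over `F` as soon as `d a = 0`, contradicting pure inseparability. -/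
lemma exists_pow_eq_of_D_eq_zero {a : K} (ha : KaehlerDifferential.D ℤ K a = 0) :
    ∃ b : K, b ^ p = a := by
  by_contra! hne
  obtain ⟨F, hF⟩ := exists_maximal_subfield_notMem p hne
  have htop : F⟮a⟯ = ⊤ := adjoin_simple_eq_top_of_maximal hF
  obtain ⟨hpow, haF⟩ := hF.prop
  have : ExpChar F p := .prime Fact.out
  have : IsPurelyInseparable F K :=
    (isPurelyInseparable_iff_pow_mem F p).2 fun x ↦ ⟨1, ⟨_, hpow x⟩, by rw [pow_one]; rfl⟩
  have hintegral : IsIntegral F a := Algebra.IsIntegral.isIntegral a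
  have hadjoin : Algebra.adjoin F {a} = ⊤ := by
    rw [← adjoin_simple_toSubalgebra_of_isAlgebraic hintegral.isAlgebraic, htop, top_toSubalgebra]
  have hDa : KaehlerDifferential.D F K a = 0 := by
    simpa only [ha, map_zero, Algebra.algebraMap_self_apply] using
      (KaehlerDifferential.map_D ℤ F K K a).symm
  have : FormallyUnramified F K :=
    formallyUnramified_of_adjoin_eq_top hadjoin fun x hx ↦ hx ▸ hDa
  have : Algebra.FiniteType F K := ⟨⟨{a}, by rwa [Finset.coe_singleton]⟩⟩
  obtain ⟨b, rfl⟩ : a ∈ (algebraMap F K).range := by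
    rw [FormallyUnramified.range_eq_top_of_isPurelyInseparable]; trivial
  exact haF b.2

end PthPowers

lemma eq_zero_of_sum_tmul_eq_zero {ι K V M : Type*} [Field K] [AddCommGroup V] [Module K V]
    [AddCommGroup M] [Module K M] {s : Finset ι} {v : ι → V} {m : ι → M}
    (hv : LinearIndepOn K v s) (h : ∑ i ∈ s, v i ⊗ₜ[K] m i = 0) {i : ι} (hi : i ∈ s) :
    m i = 0 := by
  refine (Module.forall_dual_apply_eq_zero_iff K _).1 fun φ ↦ ?_
  have hφ := congrArg (TensorProduct.rid K V ∘ φ.lTensor V) h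
  refine linearIndepOn_finset_iff.1 hv (fun j ↦ φ (m j)) ?_ i hi
  simpa using hφ

variable {K L : Type*} [Field K] [Field L] [Algebra K L]

lemma injective_mapBaseChange [Subsingleton (H1Cotangent K L)] :
    Function.Injective (KaehlerDifferential.mapBaseChange ℤ K L) := by
  refine (injective_iff_map_eq_zero _).2 fun x hx ↦ ?_
  obtain ⟨y, rfl⟩ := (H1Cotangent.exact_δ_mapBaseChange ℤ K L x).1 hx
  rw [Subsingleton.elim y 0, map_zero]

section LinearIndependence

variable {p : ℕ} [CharP K p]

lemma sum_pow_tmul_D_eq_zero [Subsingleton (H1Cotangent K L)] {ι : Type*} {s : Finset ι}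
    {v : ι → L} {b : ι → K} (h : ∑ i ∈ s, b i • v i ^ p = 0) :
    ∑ i ∈ s, (v i ^ p) ⊗ₜ[K] KaehlerDifferential.D ℤ K (b i) = 0 := by
  have : CharP L p := charP_of_injective_algebraMap (algebraMap K L).injective p
  refine injective_mapBaseChange (L := L) ?_
  have hpow (x : L) : KaehlerDifferential.D ℤ L (x ^ p) = 0 := by
    rw [Derivation.leibniz_pow, ← Nat.cast_smul_eq_nsmul L, CharP.cast_eq_zero, zero_smul]
  have hD := congrArg (KaehlerDifferential.D ℤ L) h
  simpa [Algebra.smul_def, KaehlerDifferential.mapBaseChange_tmul, hpow] using hD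

variable [Fact p.Prime]

/-- Normalising one coefficient of a shortest linear relation `∑ bᵢ vᵢᵖ = 0` to `1`, the relation
`∑ vᵢᵖ ⊗ d bᵢ = 0` is shorter, so `d bᵢ = 0`. Hence `bᵢ = cᵢᵖ` and `∑ cᵢ vᵢ = 0`. -/
lemma linearIndepOn_pow [Subsingleton (H1Cotangent K L)] {ι : Type*} {s : Finset ι} {v : ι → L}
    (hv : LinearIndepOn K v s) : LinearIndepOn K (fun i ↦ v i ^ p) s := by
  classical
  have hp : p.Prime := Fact.out
  have : CharP L p := charP_of_injective_algebraMap (algebraMap K L).injective p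
  induction s using Finset.strongInduction with | H s ih => ?_
  refine linearIndepOn_finset_iff.2 fun a ha ↦ ?_
  by_contra! ⟨i₀, hi₀, ha₀⟩
  let b i := (a i₀)⁻¹ * a i
  have hb₀ : b i₀ = 1 := inv_mul_cancel₀ ha₀
  have hb : ∑ i ∈ s, b i • v i ^ p = 0 := by
    simp only [b, mul_smul, ← Finset.smul_sum, ha, smul_zero]
  have hDb : ∀ i ∈ s, KaehlerDifferential.D ℤ K (b i) = 0 := by
    have hsum := sum_pow_tmul_D_eq_zero hb
    rw [← Finset.add_sum_erase s _ hi₀, hb₀, Derivation.map_one_eq_zero, tmul_zero,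
      zero_add] at hsum
    have hindep := ih _ (Finset.erase_ssubset hi₀) (hv.mono (s.erase_subset i₀))
    intro i hi
    obtain rfl | hne := eq_or_ne i i₀
    · rw [hb₀, Derivation.map_one_eq_zero]
    · exact eq_zero_of_sum_tmul_eq_zero hindep hsum (Finset.mem_erase.2 ⟨hne, hi⟩)
  have hc : ∀ i ∈ s, ∃ c : K, c ^ p = b i := fun i hi ↦ exists_pow_eq_of_D_eq_zero (hDb i hi)
  choose! c hc using hc
  have hcv : (∑ i ∈ s, c i • v i) ^ p = 0 := by
    rw [sum_pow_char, ← hb]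
    exact Finset.sum_congr rfl fun i hi ↦ by rw [_root_.smul_pow, hc i hi]
  have hc₀ := linearIndepOn_finset_iff.1 hv c (pow_eq_zero_iff hp.ne_zero |>.1 hcv) i₀ hi₀
  have := hc i₀ hi₀
  rw [hc₀, hb₀, zero_pow hp.ne_zero] at this
  exact zero_ne_one this

end LinearIndependence

theorem isSeparableFieldExtension_of_subsingleton_h1Cotangent [Subsingleton (H1Cotangent K L)] :
    IsSeparableFieldExtension K L := by
  intro S
  let M := adjoin K (S : Set L)
  have : Algebra.EssFiniteType K M := essFiniteType_iff.2 ⟨S, rfl⟩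
  suffices ∃ s : Finset M, IsTranscendenceBasis K ((↑) : s → M) ∧
      Algebra.IsSeparable (adjoin K (s : Set M)) M from
    let ⟨s, hs, hsep⟩ := this
    ⟨s, hs.1, hsep⟩
  obtain _ | ⟨p, hp, _⟩ := CharP.exists' K
  · exact exists_isTranscendenceBasis_and_isSeparable_of_perfectField K M
  have : ExpChar K p := .prime hp.out
  refine exists_isTranscendenceBasis_and_isSeparable_of_linearIndepOn_pow_of_essFiniteType p hp.out
    fun s hs ↦ .of_comp M.val.toLinearMap (linearIndepOn_pow (v := M.val) ?_)
  exact (M.val.toLinearMap.linearIndepOn_iff_of_injOn M.val.injective.injOn).2 hs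

end VanishingImpliesSeparable

/-- Let `(K, v_K)` be a field with a non-trivial real-valued valuation and
`(L, v_L)` a field extension with a real-valued valuation extending `v_K`, with rings of integers
`K°`, `L°`.  Then `H₁(𝕃_{L°/K°}) = 0` iff `H₁(𝕃_{L/K}) = 0`, and the latter holds precisely when
`L` is a separable field extension of `K`. -/
theorem h1Cotangent_integers_eq_zero_iff_separable
    {K L : Type*} [Field K] [Field L] [Algebra K L]
    (vK : AddValuation K (WithTop ℝ)) (vL : AddValuation L (WithTop ℝ))
    (hnt : vK.IsNontrivial)
    (hext : ∀ x : K, vL (algebraMap K L x) = vK x)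
    [Algebra vK.unitBall vL.unitBall]
    (hcomp : ∀ x : vK.unitBall,
      (algebraMap vK.unitBall vL.unitBall x : L) = algebraMap K L (x : K)) :
    (Subsingleton (Algebra.H1Cotangent vK.unitBall vL.unitBall) ↔
      Subsingleton (Algebra.H1Cotangent K L)) ∧
    (Subsingleton (Algebra.H1Cotangent K L) ↔ IsSeparableFieldExtension K L) := by
  have hw : (expNegValuation vL).comap (algebraMap K L) = expNegValuation vK :=
    Valuation.ext fun x ↦ congrArg expNeg (hext x)
  have : IsScalarTower vK.unitBall vL.unitBall L := .of_algebraMap_eq fun r ↦ (hcomp r).symm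
  refine ⟨?_, fun _ ↦ isSeparableFieldExtension_of_subsingleton_h1Cotangent,
    subsingleton_h1Cotangent_of_isSeparableFieldExtension⟩
  exact subsingleton_h1Cotangent_integers_iff (hw ▸ integers_expNegValuation vK)
    (integers_expNegValuation vL) (hw ▸ isNontrivial_expNegValuation hnt)
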